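/- arXiv:0801.3277 — 6 statements merged into one kernel-verified Lean document; each statement's English description precedes it below -/
import Mathlib

section
/- Let n ≥ 1 and let p_1, …, p_n be real numbers such that for every k = 1, …, n one has k·p_1 + (k−1)·p_2 + ⋯ + p_k > 2k − 1. Then ∫_{ℂ^n} ∏_{l=1}^{n} det( I_{n−l+1} + B((x_l, x_{l+1}, …, x_n))·B((x_l, x_{l+1}, …, x_n))* )^{−p_l} dλ(x_1, …, x_n) = π^n · ∏_{k=1}^{n} ( k·p_1 + (k−1)·p_2 + ⋯ + p_k − (2k−1) )^{−1}. -/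
open MeasureTheory Matrix

/-- The `N×N` lower-triangular Toeplitz matrix with first column `(x_N, …, x_1)`:
its `(i,k)` entry is `x_{N-i+k}` (1-based) when `k ≤ i` and `0` otherwise. -/
noncomputable def Bmat {N : ℕ} (x : Fin N → ℂ) : Matrix (Fin N) (Fin N) ℂ :=
  fun i k =>
    if h : (k : ℕ) ≤ (i : ℕ) then x ⟨N - 1 - i + k, by have h1 := i.isLt; omega⟩ else 0

/-- The subvector `(x_{l+1}, …, x_n)` (1-based), i.e. dropping the first `l` coordinates. -/
noncomputable def subvec {n : ℕ} (x : Fin n → ℂ) (l : ℕ) : Fin (n - l) → ℂ :=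
  fun i => x ⟨l + i, by have h1 := i.isLt; omega⟩

/-!
Let `D_m = det(1 + T Tᴴ)` for the `m × m` lower triangular Toeplitz matrix `T` with first column
`(x_n, x_{n-1}, …)`. Up to a Schur complement, `D_{m+1}` is the determinant of a bordered matrix to
which the Desnanot–Jacobi identity applies; its principal minors are again such determinants and
its two mixed minors are conjugate up to sign, so
`D_{m+1} D_{m-1} = D_m² + |D_{m-1} x_{n-m} + b|²`
with `b` depending only on `x_n, …, x_{n-m+1}`. The ratios `ρ_m = D_{m+1} D_{m-1} / D_m²` satisfy
`D_m = D_{m-1} ∏_{i<m} ρ_i`, hence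
`ρ_m = 1 + |x_{n-m} / ∏_{i<m} ρ_i + b'|²` and `D_k = ∏_{m<k} ρ_m^{k-m}`,
and the integrand becomes `∏_{m<n} ρ_m^{-s_{n-m}}` with `s_k = k p_1 + (k-1) p_2 + ⋯ + p_k`.

The variable `x_1` enters only `ρ_{n-1}`. Integrating it out gives
`π / (s_1 - 1) · ∏_{i<n-1} ρ_i²`, which lowers each remaining exponent `s_k` by `2`, and one repeats
with `x_2, …, x_n`.
-/

section Condensation

variable {m n α : Type*} [Fintype m] [DecidableEq m] [CommRing α]

theorem det_unit_sum_unit (M : Matrix (Unit ⊕ Unit) (Unit ⊕ Unit) α) :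
    M.det = M (.inl ()) (.inl ()) * M (.inr ()) (.inr ()) -
      M (.inl ()) (.inr ()) * M (.inr ()) (.inl ()) := by
  let e : Fin (1 + 1) ≃ Unit ⊕ Unit :=
    finSumFinEquiv.symm.trans (finOneEquiv.sumCongr finOneEquiv)
  rw [← det_submatrix_equiv_self e, det_fin_two]
  rfl

theorem det_fromBlocks_unit (H : Matrix m m α) [Invertible H] (p : Matrix m Unit α)
    (q : Matrix Unit m α) (s : Matrix Unit Unit α) :
    (fromBlocks H p q s).det = H.det * (s - q * ⅟H * p) () () := by
  rw [det_fromBlocks₁₁, det_unique (s - q * ⅟H * p)]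

theorem desnanot_jacobi (H : Matrix m m α) [Invertible H] (p₁ p₂ : Matrix m Unit α)
    (q₁ q₂ : Matrix Unit m α) (s₁₁ s₁₂ s₂₁ s₂₂ : Matrix Unit Unit α) :
    (fromBlocks H (fromCols p₁ p₂) (fromRows q₁ q₂) (fromBlocks s₁₁ s₁₂ s₂₁ s₂₂)).det * H.det =
      (fromBlocks H p₁ q₁ s₁₁).det * (fromBlocks H p₂ q₂ s₂₂).det -
        (fromBlocks H p₂ q₁ s₁₂).det * (fromBlocks H p₁ q₂ s₂₁).det := by
  simp only [det_fromBlocks_unit]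
  rw [det_fromBlocks₁₁, fromRows_mul, fromRows_mul_fromCols, det_unit_sum_unit]
  simp only [Matrix.sub_apply, fromBlocks_apply₁₁, fromBlocks_apply₁₂, fromBlocks_apply₂₁,
    fromBlocks_apply₂₂]
  ring

variable [Fintype n] [StarRing α]

theorem det_one_add_fromBlocks_mul_conjTranspose_mul_det (R : Matrix m n α)
    [Invertible (1 + R * Rᴴ)] (u : Matrix m Unit α) (v : Matrix Unit n α)
    (x : Matrix Unit Unit α) :
    (1 + fromBlocks R u v x * (fromBlocks R u v x)ᴴ).det * (1 + R * Rᴴ).det =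
      (1 + fromCols R u * (fromCols R u)ᴴ).det * (1 + fromRows R v * (fromRows R v)ᴴ).det +
        (fromBlocks (1 + R * Rᴴ) u (v * Rᴴ) x).det *
          star (fromBlocks (1 + R * Rᴴ) u (v * Rᴴ) x).det := by
  set H := 1 + R * Rᴴ
  have hcols : (1 + fromCols R u * (fromCols R u)ᴴ).det = (fromBlocks H u (-uᴴ) 1).det := by
    rw [det_fromBlocks_one₂₂, conjTranspose_fromCols_eq_fromRows_conjTranspose,
      fromCols_mul_fromRows, Matrix.mul_neg, sub_neg_eq_add, add_assoc]
  have hrows : 1 + fromRows R v * (fromRows R v)ᴴ =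
      fromBlocks H (R * vᴴ) (v * Rᴴ) (1 + v * vᴴ) := by
    rw [conjTranspose_fromRows_eq_fromCols_conjTranspose, fromRows_mul_fromCols, ← fromBlocks_one,
      fromBlocks_add, zero_add, zero_add]
  have hstar : (fromBlocks H (R * vᴴ) (-uᴴ) (-xᴴ)).det =
      -star (fromBlocks H u (v * Rᴴ) x).det := by
    have hH : Hᴴ = H := by simp [H]
    rw [← det_conjTranspose, fromBlocks_conjTranspose, hH, conjTranspose_mul,
      conjTranspose_conjTranspose, det_fromBlocks_unit, det_fromBlocks_unit]
    simp only [Matrix.sub_apply, Matrix.neg_apply, Matrix.neg_mul]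
    ring
  have hfull : (1 + fromBlocks R u v x * (fromBlocks R u v x)ᴴ).det =
      (fromBlocks H (fromCols (R * vᴴ) u) (fromRows (v * Rᴴ) (-uᴴ))
        (fromBlocks (1 + v * vᴴ) x (-xᴴ) 1)).det := by
    have hA : 1 + fromBlocks R u v x * (fromBlocks R u v x)ᴴ =
        (1 + fromRows R v * (fromRows R v)ᴴ) - fromRows u x * -(fromRows u x)ᴴ := by
      rw [← fromCols_fromRows_eq_fromBlocks, conjTranspose_fromCols_eq_fromRows_conjTranspose,
        fromCols_mul_fromRows, Matrix.mul_neg, sub_neg_eq_add, add_assoc]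
    rw [hA, ← det_fromBlocks_one₂₂, hrows,
      ← det_submatrix_equiv_self (Equiv.sumAssoc m Unit Unit)]
    congr 1
    ext ((i | i) | i) ((j | j) | j) <;> rfl
  rw [hfull, desnanot_jacobi, hcols, hrows, hstar]
  ring

end Condensation

section OneAddGramDet

open scoped ComplexOrder

variable {m n m' n' 𝕜 : Type*} [Fintype m] [DecidableEq m] [Fintype n] [Fintype m']
  [DecidableEq m'] [Fintype n'] [RCLike 𝕜]

/-- The determinant of `1 + A Aᴴ`, which is a positive real number for every matrix `A`; this is
the factor `det(I + B(x)B(x)*)` of the integrand. -/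
noncomputable def oneAddGramDet (A : Matrix m n 𝕜) : ℝ :=
  RCLike.re (1 + A * Aᴴ).det

theorem det_one_add_mul_conjTranspose_pos (A : Matrix m n 𝕜) : 0 < (1 + A * Aᴴ).det :=
  (PosDef.one.add_posSemidef (posSemidef_self_mul_conjTranspose A)).det_pos

theorem oneAddGramDet_pos (A : Matrix m n 𝕜) : 0 < oneAddGramDet A :=
  (RCLike.pos_iff.mp (det_one_add_mul_conjTranspose_pos A)).1

theorem ofReal_oneAddGramDet (A : Matrix m n 𝕜) :
    (oneAddGramDet A : 𝕜) = (1 + A * Aᴴ).det := by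
  have him := (RCLike.pos_iff.mp (det_one_add_mul_conjTranspose_pos A)).2
  exact RCLike.ext (by simp [oneAddGramDet]) (by simp [him])

theorem oneAddGramDet_conjTranspose [DecidableEq n] (A : Matrix m n 𝕜) :
    oneAddGramDet Aᴴ = oneAddGramDet A := by
  rw [oneAddGramDet, conjTranspose_conjTranspose, det_one_add_mul_comm, ← oneAddGramDet]

theorem oneAddGramDet_submatrix_id {A : Matrix m n 𝕜} {f : n' → n} (hf : f.Injective)
    (hA : ∀ i, ∀ j ∉ Set.range f, A i j = 0) :
    oneAddGramDet (A.submatrix id f) = oneAddGramDet A := by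
  have hgram : A.submatrix id f * (A.submatrix id f)ᴴ = A * Aᴴ := by
    ext i k
    exact Fintype.sum_of_injective f hf _ _ (fun j hj => by simp [hA i j hj]) fun _ => rfl
  rw [oneAddGramDet, hgram, ← oneAddGramDet]

theorem oneAddGramDet_submatrix {A : Matrix m n 𝕜}
    {e : m' → m} {f : n' → n} (he : e.Injective) (hf : f.Injective)
    (hrow : ∀ i ∉ Set.range e, ∀ j, A i j = 0) (hcol : ∀ i, ∀ j ∉ Set.range f, A i j = 0) :
    oneAddGramDet (A.submatrix e f) = oneAddGramDet A := by
  classical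
  have hsplit : A.submatrix e f = ((A.submatrix id f)ᴴ.submatrix id e)ᴴ := by
    ext i j; simp
  rw [hsplit, oneAddGramDet_conjTranspose, oneAddGramDet_submatrix_id he,
    oneAddGramDet_conjTranspose, oneAddGramDet_submatrix_id hf hcol]
  intro j i hi
  simp [hrow i hi]

theorem oneAddGramDet_submatrix_of_bijective {A : Matrix m n 𝕜} {e : m' → m} {f : n' → n}
    (he : e.Bijective) (hf : f.Bijective) :
    oneAddGramDet (A.submatrix e f) = oneAddGramDet A :=
  oneAddGramDet_submatrix he.injective hf.injective
    (fun i hi => (hi (he.surjective i)).elim) fun _ j hj => (hj (hf.surjective j)).elim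

theorem exists_oneAddGramDet_fromBlocks_mul (R : Matrix m n 𝕜) (u : Matrix m Unit 𝕜)
    (v : Matrix Unit n 𝕜) :
    ∃ b : 𝕜, ∀ a : 𝕜,
      oneAddGramDet (fromBlocks R u v (of fun _ _ => a)) * oneAddGramDet R =
        oneAddGramDet (fromCols R u) * oneAddGramDet (fromRows R v) +
          ‖oneAddGramDet R • a + b‖ ^ 2 := by
  let _ := invertibleOfIsUnitDet _ (det_one_add_mul_conjTranspose_pos R).ne'.isUnit
  let c : 𝕜 := (v * Rᴴ * ⅟(1 + R * Rᴴ) * u : Matrix Unit Unit 𝕜) () ()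
  refine ⟨-(oneAddGramDet R * c), fun a => ?_⟩
  have hcorner : (fromBlocks (1 + R * Rᴴ) u (v * Rᴴ) (of fun _ _ => a)).det =
      oneAddGramDet R • a + -(oneAddGramDet R * c) := by
    rw [det_fromBlocks_unit, ← ofReal_oneAddGramDet, Matrix.sub_apply, of_apply,
      RCLike.real_smul_eq_coe_mul]
    ring
  have hcond := det_one_add_fromBlocks_mul_conjTranspose_mul_det R u v (of fun _ _ => a)
  simp only [← ofReal_oneAddGramDet, hcorner] at hcond
  rw [← starRingEnd_apply, RCLike.mul_conj] at hcond
  exact_mod_cast hcond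

end OneAddGramDet

section LowerToeplitz

variable {𝕜 : Type*} [RCLike 𝕜]

/-- The `m × m` lower-triangular Toeplitz matrix with first column `(y 0, …, y (m - 1))`. In the
notation of the theorem, `B(x_l, …, x_n)` is obtained from `y j = x_{n-j}`, so that the matrices for
different `l` are leading blocks of one another. -/
def lowerToeplitz {α : Type*} [Zero α] (m : ℕ) (y : ℕ → α) : Matrix (Fin m) (Fin m) α :=
  of fun i k => if (k : ℕ) ≤ i then y (i - k) else 0

theorem lowerToeplitz_apply_of_lt {α : Type*} [Zero α] {m : ℕ} (y : ℕ → α) {i k : Fin m}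
    (h : i < k) : lowerToeplitz m y i k = 0 := by
  simp [lowerToeplitz, h]

/-- The determinant `D_m(y) = det(1 + T Tᴴ)` for the Toeplitz matrix `T` with first column
`(y 0, …, y (m - 1))`. -/
noncomputable def toeplitzGramDet (m : ℕ) (y : ℕ → 𝕜) : ℝ :=
  oneAddGramDet (lowerToeplitz m y)

theorem toeplitzGramDet_pos (m : ℕ) (y : ℕ → 𝕜) : 0 < toeplitzGramDet m y :=
  oneAddGramDet_pos _

theorem toeplitzGramDet_zero (y : ℕ → 𝕜) : toeplitzGramDet 0 y = 1 := by
  simp [toeplitzGramDet, oneAddGramDet]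

theorem toeplitzGramDet_congr {m : ℕ} {y z : ℕ → 𝕜} (h : ∀ j < m, y j = z j) :
    toeplitzGramDet m y = toeplitzGramDet m z := by
  have hT : lowerToeplitz m y = lowerToeplitz m z := by
    ext i k
    simp [lowerToeplitz, h (i - k) (by omega)]
  rw [toeplitzGramDet, hT, ← toeplitzGramDet]

theorem oneAddGramDet_lowerToeplitz_submatrix_castSucc_id (m : ℕ) (y : ℕ → 𝕜) :
    oneAddGramDet ((lowerToeplitz (m + 1) y).submatrix Fin.castSucc id) = toeplitzGramDet m y := by
  have hT : lowerToeplitz m y =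
      ((lowerToeplitz (m + 1) y).submatrix Fin.castSucc id).submatrix id Fin.castSucc := by
    ext i k; simp [lowerToeplitz]
  rw [toeplitzGramDet, hT, oneAddGramDet_submatrix_id (Fin.castSucc_injective m)]
  intro i j hj
  obtain ⟨k, rfl⟩ | rfl := j.eq_castSucc_or_eq_last
  · exact (hj ⟨k, rfl⟩).elim
  · exact lowerToeplitz_apply_of_lt y i.castSucc_lt_last

theorem oneAddGramDet_lowerToeplitz_submatrix_id_succ (m : ℕ) (y : ℕ → 𝕜) :
    oneAddGramDet ((lowerToeplitz (m + 1) y).submatrix id Fin.succ) = toeplitzGramDet m y := by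
  have hT : lowerToeplitz m y =
      ((lowerToeplitz (m + 1) y).submatrix id Fin.succ).submatrix Fin.succ id := by
    ext i k; simp [lowerToeplitz]
  rw [toeplitzGramDet, hT, oneAddGramDet_submatrix (Fin.succ_injective m) Function.injective_id]
  · intro i hi k
    obtain rfl : i = 0 := by simpa using hi
    exact lowerToeplitz_apply_of_lt y k.succ_pos
  · simp

theorem oneAddGramDet_lowerToeplitz_submatrix_castSucc_succ (m : ℕ) (y : ℕ → 𝕜) :
    oneAddGramDet ((lowerToeplitz (m + 1) y).submatrix Fin.castSucc Fin.succ) =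
      toeplitzGramDet (m - 1) y := by
  cases m with
  | zero => simp [toeplitzGramDet, oneAddGramDet]
  | succ m =>
    have hT : lowerToeplitz m y = ((lowerToeplitz (m + 1 + 1) y).submatrix Fin.castSucc
        Fin.succ).submatrix Fin.succ Fin.castSucc := by
      ext i k; simp [lowerToeplitz]
    rw [Nat.add_sub_cancel, toeplitzGramDet, hT,
      oneAddGramDet_submatrix (Fin.succ_injective m) (Fin.castSucc_injective m)]
    · intro i hi k
      obtain rfl : i = 0 := by simpa using hi
      exact lowerToeplitz_apply_of_lt y k.succ_pos
    · intro i j hj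
      obtain ⟨k, rfl⟩ | rfl := j.eq_castSucc_or_eq_last
      · exact (hj ⟨k, rfl⟩).elim
      · exact lowerToeplitz_apply_of_lt y (Fin.castSucc_lt_succ_iff.mpr i.le_last)

theorem bijective_sumElim_castSucc_last (m : ℕ) :
    (Sum.elim Fin.castSucc fun _ => Fin.last m : Fin m ⊕ Unit → Fin (m + 1)).Bijective := by
  refine ⟨by rintro (i | i) (j | j) <;> simp [Fin.castSucc_ne_last, (Fin.castSucc_ne_last _).symm],
    fun i => ?_⟩
  obtain ⟨k, rfl⟩ | rfl := i.eq_castSucc_or_eq_last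
  · exact ⟨.inl k, rfl⟩
  · exact ⟨.inr (), rfl⟩

theorem bijective_sumElim_succ_zero (m : ℕ) :
    (Sum.elim Fin.succ fun _ => 0 : Fin m ⊕ Unit → Fin (m + 1)).Bijective := by
  refine ⟨by rintro (i | i) (j | j) <;> simp [Fin.succ_ne_zero, (Fin.succ_ne_zero _).symm],
    fun i => ?_⟩
  obtain rfl | ⟨k, rfl⟩ := i.eq_zero_or_eq_succ
  · exact ⟨.inr (), rfl⟩
  · exact ⟨.inl k, rfl⟩

-- For `m = 0` the truncated `m - 1 = 0` realises the right convention `D_{-1} = 1`.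
theorem exists_toeplitzGramDet_succ_mul (m : ℕ) (y : ℕ → 𝕜) :
    ∃ b : 𝕜, ∀ z : ℕ → 𝕜, (∀ j < m, z j = y j) →
      toeplitzGramDet (m + 1) z * toeplitzGramDet (m - 1) y =
        toeplitzGramDet m y ^ 2 + ‖toeplitzGramDet (m - 1) y • z m + b‖ ^ 2 := by
  let T := lowerToeplitz (m + 1) y
  let rows : Fin m ⊕ Unit → Fin (m + 1) := Sum.elim Fin.castSucc fun _ => Fin.last m
  let cols : Fin m ⊕ Unit → Fin (m + 1) := Sum.elim Fin.succ fun _ => 0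
  have hrows : rows.Bijective := bijective_sumElim_castSucc_last m
  have hcols : cols.Bijective := bijective_sumElim_succ_zero m
  let R := T.submatrix Fin.castSucc Fin.succ
  let u : Matrix (Fin m) Unit 𝕜 := T.submatrix Fin.castSucc fun _ => 0
  let v : Matrix Unit (Fin m) 𝕜 := T.submatrix (fun _ => Fin.last m) Fin.succ
  obtain ⟨b, hb⟩ := exists_oneAddGramDet_fromBlocks_mul R u v
  refine ⟨b, fun z hz => ?_⟩
  have hblocks : fromBlocks R u v (of fun _ _ => z m) =
      (lowerToeplitz (m + 1) z).submatrix rows cols := by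
    ext (i | i) (j | j)
    · simp [R, rows, cols, T, lowerToeplitz, hz (i - (j + 1)) (by omega)]
    · simp [u, rows, cols, T, lowerToeplitz, hz i (by omega)]
    · simp [v, rows, cols, T, lowerToeplitz, hz (m - (j + 1)) (by omega)]
    · simp [rows, cols, lowerToeplitz]
  have hfromCols : fromCols R u = (T.submatrix Fin.castSucc id).submatrix id cols := by
    ext i (j | j) <;> rfl
  have hfromRows : fromRows R v = (T.submatrix id Fin.succ).submatrix rows id := by
    ext (i | i) j <;> rfl
  have hcond := hb (z m)
  rw [hblocks, hfromCols, hfromRows, oneAddGramDet_submatrix_of_bijective hrows hcols,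
    oneAddGramDet_submatrix_of_bijective Function.bijective_id hcols,
    oneAddGramDet_submatrix_of_bijective hrows Function.bijective_id,
    oneAddGramDet_lowerToeplitz_submatrix_castSucc_id,
    oneAddGramDet_lowerToeplitz_submatrix_id_succ,
    oneAddGramDet_lowerToeplitz_submatrix_castSucc_succ, ← sq] at hcond
  exact hcond

/-- The quotient `ρ_m = D_{m+1} D_{m-1} / D_m²` of Toeplitz determinants, where the truncated
subtraction gives `D_{-1} = D_0 = 1`. The integrand is a product of powers of these quotients, and
`ρ_m - 1` is the squared norm of an affine function of `y m`. -/
noncomputable def condensationRatio (m : ℕ) (y : ℕ → 𝕜) : ℝ :=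
  toeplitzGramDet (m + 1) y * toeplitzGramDet (m - 1) y / toeplitzGramDet m y ^ 2

theorem condensationRatio_pos (m : ℕ) (y : ℕ → 𝕜) : 0 < condensationRatio m y :=
  div_pos (mul_pos (toeplitzGramDet_pos _ y) (toeplitzGramDet_pos _ y))
    (pow_pos (toeplitzGramDet_pos m y) 2)

theorem condensationRatio_congr {m : ℕ} {y z : ℕ → 𝕜} (h : ∀ j ≤ m, y j = z j) :
    condensationRatio m y = condensationRatio m z := by
  simp only [condensationRatio]
  rw [toeplitzGramDet_congr fun j hj => h j (by omega),
    toeplitzGramDet_congr (m := m - 1) fun j hj => h j (by omega),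
    toeplitzGramDet_congr (m := m) fun j hj => h j (by omega)]

theorem prod_range_condensationRatio (m : ℕ) (y : ℕ → 𝕜) :
    ∏ i ∈ Finset.range m, condensationRatio i y =
      toeplitzGramDet m y / toeplitzGramDet (m - 1) y := by
  induction m with
  | zero => simp [toeplitzGramDet_zero]
  | succ m ih =>
    have hm := (toeplitzGramDet_pos m y).ne'
    have hm' := (toeplitzGramDet_pos (m - 1) y).ne'
    rw [Finset.prod_range_succ, ih, condensationRatio, Nat.add_sub_cancel]
    field_simp

theorem toeplitzGramDet_eq_prod_condensationRatio_pow (k : ℕ) (y : ℕ → 𝕜) :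
    toeplitzGramDet k y = ∏ m ∈ Finset.range k, condensationRatio m y ^ (k - m) := by
  induction k with
  | zero => simp [toeplitzGramDet_zero]
  | succ k ih =>
    have hstep : toeplitzGramDet (k + 1) y =
        toeplitzGramDet k y * ∏ m ∈ Finset.range (k + 1), condensationRatio m y := by
      rw [prod_range_condensationRatio, Nat.add_sub_cancel,
        mul_div_cancel₀ _ (toeplitzGramDet_pos k y).ne']
    rw [hstep, ih, Finset.prod_range_succ, Finset.prod_range_succ, ← mul_assoc,
      ← Finset.prod_mul_distrib, Nat.add_sub_cancel_left, pow_one]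
    congr 1
    refine Finset.prod_congr rfl fun m hm => ?_
    rw [Nat.succ_sub (Finset.mem_range.mp hm).le, pow_succ]

theorem prod_toeplitzGramDet_rpow (n : ℕ) (q : ℕ → ℝ) (y : ℕ → 𝕜) :
    ∏ l ∈ Finset.range n, toeplitzGramDet (n - l) y ^ (-q l) =
      ∏ m ∈ Finset.range n, condensationRatio m y ^
        (-∑ j ∈ Finset.range (n - m), (((n - m : ℕ) : ℝ) - j) * q j) := by
  have hfactor (l : ℕ) : toeplitzGramDet (n - l) y ^ (-q l) =
      ∏ m ∈ Finset.range (n - l), condensationRatio m y ^ (-((n - l - m : ℕ) * q l)) := by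
    rw [toeplitzGramDet_eq_prod_condensationRatio_pow,
      ← Real.finsetProd_rpow _ _ fun m _ => pow_nonneg (condensationRatio_pos m y).le _]
    refine Finset.prod_congr rfl fun m _ => ?_
    rw [← Real.rpow_natCast, ← Real.rpow_mul (condensationRatio_pos m y).le, mul_neg]
  simp_rw [hfactor]
  rw [Finset.prod_comm' (t' := Finset.range n) (s' := fun m => Finset.range (n - m))
    (by simp only [Finset.mem_range]; omega)]
  refine Finset.prod_congr rfl fun m _ => ?_
  rw [← Finset.sum_neg_distrib, Real.rpow_sum_of_pos (condensationRatio_pos m y)]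
  refine Finset.prod_congr rfl fun l hl => ?_
  rw [Nat.sub_right_comm, Nat.cast_sub (Finset.mem_range.mp hl).le]

theorem exists_condensationRatio_eq (m : ℕ) (y : ℕ → 𝕜) :
    ∃ b : 𝕜, ∀ z : ℕ → 𝕜, (∀ j < m, z j = y j) →
      condensationRatio m z =
        1 + ‖(∏ i ∈ Finset.range m, condensationRatio i y)⁻¹ • z m + b‖ ^ 2 := by
  obtain ⟨b, hb⟩ := exists_toeplitzGramDet_succ_mul m y
  have hm := toeplitzGramDet_pos m y
  refine ⟨(toeplitzGramDet m y)⁻¹ • b, fun z hz => ?_⟩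
  have hfactor : (toeplitzGramDet m y / toeplitzGramDet (m - 1) y)⁻¹ • z m +
      (toeplitzGramDet m y)⁻¹ • b =
      (toeplitzGramDet m y)⁻¹ • (toeplitzGramDet (m - 1) y • z m + b) := by
    rw [smul_add, smul_smul, inv_div, div_eq_inv_mul]
  rw [prod_range_condensationRatio, hfactor, norm_smul, Real.norm_of_nonneg (inv_pos.mpr hm).le,
    condensationRatio, toeplitzGramDet_congr hz,
    toeplitzGramDet_congr (m := m - 1) fun j hj => hz j (by omega), hb z hz]
  field_simp

end LowerToeplitz

section ReverseSeq

variable {n : ℕ} {𝕜 : Type*} [RCLike 𝕜]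

/-- The coordinates of `x` in reverse order, continued by zero: `(x_n, …, x_1, 0, 0, …)`. -/
def reverseSeq {α : Type*} [Zero α] (x : Fin n → α) (j : ℕ) : α :=
  if h : j < n then x (Fin.rev ⟨j, h⟩) else 0

theorem Bmat_subvec (x : Fin n → ℂ) (l : ℕ) :
    Bmat (subvec x l) = lowerToeplitz (n - l) (reverseSeq x) := by
  ext i k
  by_cases h : k ≤ i
  · have hrev : (Fin.rev ⟨i - k, by omega⟩ : Fin n) = ⟨l + (n - l - 1 - i + k), by omega⟩ := by
      ext; simp only [Fin.val_rev]; omega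
    simp [Bmat, subvec, lowerToeplitz, reverseSeq, h, hrev, show (i : ℕ) - k < n by omega]
  · simp [Bmat, lowerToeplitz, h]

theorem reverseSeq_cons_of_lt {α : Type*} [Zero α] (a : α) (x : Fin n → α) {j : ℕ} (hj : j < n) :
    reverseSeq (Fin.cons a x : Fin (n + 1) → α) j = reverseSeq x j := by
  have hrev : (Fin.rev ⟨j, by omega⟩ : Fin (n + 1)) = (Fin.rev ⟨j, hj⟩).succ := by
    ext; simp only [Fin.val_rev, Fin.val_succ]; omega
  rw [reverseSeq, reverseSeq, dif_pos (by omega), dif_pos hj, hrev, Fin.cons_succ]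

theorem reverseSeq_cons_self {α : Type*} [Zero α] (a : α) (x : Fin n → α) :
    reverseSeq (Fin.cons a x : Fin (n + 1) → α) n = a := by
  have hrev : (Fin.rev ⟨n, n.lt_succ_self⟩ : Fin (n + 1)) = 0 := Fin.rev_last n
  rw [reverseSeq, dif_pos n.lt_succ_self, hrev, Fin.cons_zero]

theorem continuous_toeplitzGramDet_reverseSeq (m : ℕ) :
    Continuous fun x : Fin n → 𝕜 => toeplitzGramDet m (reverseSeq x) := by
  have hseq (j : ℕ) : Continuous fun x : Fin n → 𝕜 => reverseSeq x j := by
    unfold reverseSeq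
    split_ifs <;> fun_prop
  have hT : Continuous fun x : Fin n → 𝕜 => lowerToeplitz m (reverseSeq x) := by
    refine continuous_matrix fun i k => ?_
    simp only [lowerToeplitz, of_apply]
    split_ifs
    · exact hseq _
    · exact continuous_const
  exact RCLike.continuous_re.comp
    (continuous_const.add (hT.matrix_mul hT.matrix_conjTranspose)).matrix_det

theorem measurable_prod_condensationRatio_rpow (m : ℕ) (e : ℕ → ℝ) :
    Measurable fun x : Fin n → 𝕜 =>
      ∏ i ∈ Finset.range m, condensationRatio i (reverseSeq x) ^ e i := by
  have hD (k : ℕ) := (continuous_toeplitzGramDet_reverseSeq (n := n) (𝕜 := 𝕜) k).measurable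
  exact Finset.measurable_fun_prod _ fun i _ =>
    (((hD (i + 1)).mul (hD (i - 1))).div ((hD i).pow_const 2)).pow_const _

end ReverseSeq

section Integration

open Filter Set Topology

theorem integral_Ioi_mul_one_add_sq_rpow_neg {q : ℝ} (hq : 1 < q) :
    ∫ r in Ioi (0 : ℝ), r * (1 + r ^ 2) ^ (-q) = 1 / (2 * (q - 1)) := by
  have hq' : q - 1 ≠ 0 := (sub_pos.mpr hq).ne'
  have hderiv (r : ℝ) : HasDerivAt (fun r : ℝ => -(1 / (2 * (q - 1))) * (1 + r ^ 2) ^ (-(q - 1)))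
      (r * (1 + r ^ 2) ^ (-q)) r := by
    have hsq : HasDerivAt (fun r : ℝ => 1 + r ^ 2) (2 * r) r := by
      simpa using (hasDerivAt_pow 2 r).const_add 1
    refine ((hsq.rpow_const (p := -(q - 1)) (Or.inl (by positivity))).const_mul _).congr_deriv ?_
    rw [show -(q - 1) - 1 = -q by ring]
    field_simp
  have hlim : Tendsto (fun r : ℝ => -(1 / (2 * (q - 1))) * (1 + r ^ 2) ^ (-(q - 1)))
      atTop (𝓝 0) := by
    have hsq : Tendsto (fun r : ℝ => 1 + r ^ 2) atTop atTop :=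
      tendsto_atTop_add_const_left _ _ (tendsto_pow_atTop two_ne_zero)
    simpa using ((tendsto_rpow_neg_atTop (sub_pos.mpr hq)).comp hsq).const_mul
      (-(1 / (2 * (q - 1))))
  rw [integral_Ioi_of_hasDerivAt_of_nonneg' (fun r _ => hderiv r)
    (fun r hr => mul_nonneg (le_of_lt hr) (by positivity)) hlim]
  simp

theorem integrable_one_add_norm_sq_rpow_neg {q : ℝ} (hq : 1 < q) :
    Integrable fun z : ℂ => (1 + ‖z‖ ^ 2) ^ (-q) := by
  convert integrable_rpow_neg_one_add_norm_sq (E := ℂ) (μ := volume) (r := 2 * q)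
    (by rw [Complex.finrank_real_complex]; push_cast; linarith) using 3
  ring

theorem integral_one_add_norm_sq_rpow_neg {q : ℝ} (hq : 1 < q) :
    ∫ z : ℂ, (1 + ‖z‖ ^ 2) ^ (-q) = Real.pi / (q - 1) := by
  have hball : (volume : Measure ℂ).real (Metric.ball 0 1) = Real.pi := by
    simp [Measure.real, Complex.volume_ball]
  have hq' : q - 1 ≠ 0 := (sub_pos.mpr hq).ne'
  rw [integral_fun_norm_addHaar volume (fun r : ℝ => (1 + r ^ 2) ^ (-q)),
    Complex.finrank_real_complex, hball]
  simp only [Nat.add_one_sub_one, pow_one, smul_eq_mul, nsmul_eq_mul,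
    integral_Ioi_mul_one_add_sq_rpow_neg hq]
  push_cast
  field_simp

theorem lintegral_one_add_norm_smul_add_sq_rpow_neg {q c : ℝ} (hq : 1 < q) (hc : c ≠ 0) (b : ℂ) :
    ∫⁻ z : ℂ, ENNReal.ofReal ((1 + ‖c • z + b‖ ^ 2) ^ (-q)) =
      ENNReal.ofReal (Real.pi / (q - 1) * c⁻¹ ^ 2) := by
  have hint : Integrable fun z : ℂ => (1 + ‖c • z + b‖ ^ 2) ^ (-q) :=
    ((integrable_one_add_norm_sq_rpow_neg hq).comp_add_right b).comp_smul hc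
  rw [← ofReal_integral_eq_lintegral_ofReal hint (.of_forall fun z => by positivity),
    Measure.integral_comp_smul volume (fun z : ℂ => (1 + ‖z + b‖ ^ 2) ^ (-q)),
    integral_add_right_eq_self (fun z : ℂ => (1 + ‖z‖ ^ 2) ^ (-q)),
    integral_one_add_norm_sq_rpow_neg hq, Complex.finrank_real_complex, ← inv_pow,
    abs_of_nonneg (by positivity), smul_eq_mul, mul_comm]

theorem lintegral_fin_succ_fun {α : Type*} [MeasureSpace α] [SigmaFinite (volume : Measure α)]
    {n : ℕ} {f : (Fin (n + 1) → α) → ENNReal} (hf : Measurable f) :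
    ∫⁻ x, f x = ∫⁻ x : Fin n → α, ∫⁻ a : α, f (Fin.cons a x) := by
  let e := MeasurableEquiv.piFinSuccAbove (fun _ : Fin (n + 1) => α) 0
  have he := (volume_preserving_piFinSuccAbove (fun _ : Fin (n + 1) => α) 0).symm
  have hcons (a : α) (x : Fin n → α) : e.symm (a, x) = Fin.cons a x := by
    simp [e, MeasurableEquiv.piFinSuccAbove, Fin.insertNthEquiv]
  calc ∫⁻ x, f x = ∫⁻ z : α × (Fin n → α), f (e.symm z) := (he.lintegral_comp hf).symm
    _ = ∫⁻ x : Fin n → α, ∫⁻ a : α, f (e.symm (a, x)) :=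
      lintegral_prod_symm' _ (hf.comp e.symm.measurable)
    _ = ∫⁻ x : Fin n → α, ∫⁻ a : α, f (Fin.cons a x) := by simp_rw [hcons]

variable {n : ℕ}

theorem lintegral_prod_condensationRatio_cons_rpow {e : ℕ → ℝ} (he : 1 < e n) (x : Fin n → ℂ) :
    ∫⁻ a : ℂ, ENNReal.ofReal (∏ i ∈ Finset.range (n + 1),
        condensationRatio i (reverseSeq (Fin.cons a x : Fin (n + 1) → ℂ)) ^ (-e i)) =
      ENNReal.ofReal (Real.pi / (e n - 1)) * ENNReal.ofReal (∏ i ∈ Finset.range n,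
        condensationRatio i (reverseSeq x) ^ (-(e i - 2))) := by
  let ρ (i : ℕ) := condensationRatio i (reverseSeq x)
  have hρ (i : ℕ) : 0 < ρ i := condensationRatio_pos i _
  obtain ⟨b, hb⟩ := exists_condensationRatio_eq n (reverseSeq x)
  have hsplit (a : ℂ) : ∏ i ∈ Finset.range (n + 1),
      condensationRatio i (reverseSeq (Fin.cons a x : Fin (n + 1) → ℂ)) ^ (-e i) =
      (∏ i ∈ Finset.range n, ρ i ^ (-e i)) *
        (1 + ‖(∏ i ∈ Finset.range n, ρ i)⁻¹ • a + b‖ ^ 2) ^ (-e n) := by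
    rw [Finset.prod_range_succ, hb _ fun j hj => reverseSeq_cons_of_lt a x hj,
      reverseSeq_cons_self]
    congr 1
    refine Finset.prod_congr rfl fun i hi => ?_
    rw [condensationRatio_congr fun j hj =>
      reverseSeq_cons_of_lt a x (hj.trans_lt (Finset.mem_range.mp hi))]
  have hexponent : (∏ i ∈ Finset.range n, ρ i ^ (-e i)) * (∏ i ∈ Finset.range n, ρ i) ^ 2 =
      ∏ i ∈ Finset.range n, ρ i ^ (-(e i - 2)) := by
    rw [← Finset.prod_pow, ← Finset.prod_mul_distrib]
    refine Finset.prod_congr rfl fun i _ => ?_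
    rw [← Real.rpow_natCast, ← Real.rpow_add (hρ i)]
    congr 1
    push_cast
    ring
  have hconst : 0 ≤ ∏ i ∈ Finset.range n, ρ i ^ (-e i) :=
    Finset.prod_nonneg fun i _ => Real.rpow_nonneg (hρ i).le _
  simp_rw [hsplit, ENNReal.ofReal_mul hconst]
  rw [lintegral_const_mul' _ _ ENNReal.ofReal_ne_top,
    lintegral_one_add_norm_smul_add_sq_rpow_neg he
      (inv_ne_zero (Finset.prod_pos fun i _ => hρ i).ne'),
    inv_inv, ← hexponent, ← ENNReal.ofReal_mul hconst,
    ← ENNReal.ofReal_mul (div_nonneg Real.pi_pos.le (sub_pos.mpr he).le), mul_left_comm]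

theorem lintegral_prod_condensationRatio_rpow {e : ℕ → ℝ}
    (he : ∀ m < n, 2 * ((n : ℝ) - m) - 1 < e m) :
    ∫⁻ x : Fin n → ℂ, ENNReal.ofReal
        (∏ m ∈ Finset.range n, condensationRatio m (reverseSeq x) ^ (-e m)) =
      ENNReal.ofReal (∏ m ∈ Finset.range n, Real.pi / (e m - (2 * ((n : ℝ) - m) - 1))) := by
  induction n generalizing e with
  | zero => simp [volume_pi]
  | succ n ih =>
    have hlast : 1 < e n := by
      have := he n n.lt_succ_self
      push_cast at this
      linarith
    have hrest (m : ℕ) (hm : m < n) : 2 * ((n : ℝ) - m) - 1 < e m - 2 := by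
      have := he m (hm.trans n.lt_succ_self)
      push_cast at this
      linarith
    rw [lintegral_fin_succ_fun
      (measurable_prod_condensationRatio_rpow (n + 1) fun m => -e m).ennreal_ofReal]
    simp_rw [lintegral_prod_condensationRatio_cons_rpow hlast]
    rw [lintegral_const_mul' _ _ ENNReal.ofReal_ne_top, ih hrest,
      ← ENNReal.ofReal_mul (div_nonneg Real.pi_pos.le (sub_pos.mpr hlast).le),
      Finset.prod_range_succ, mul_comm]
    congr 2
    · refine Finset.prod_congr rfl fun m _ => ?_
      push_cast
      ring_nf
    · push_cast
      ring_nf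

theorem integral_prod_condensationRatio_rpow {e : ℕ → ℝ}
    (he : ∀ m < n, 2 * ((n : ℝ) - m) - 1 < e m) :
    ∫ x : Fin n → ℂ, ∏ m ∈ Finset.range n, condensationRatio m (reverseSeq x) ^ (-e m) =
      ∏ m ∈ Finset.range n, Real.pi / (e m - (2 * ((n : ℝ) - m) - 1)) := by
  rw [integral_eq_lintegral_of_nonneg_ae
      (.of_forall fun x => Finset.prod_nonneg fun m _ =>
        Real.rpow_nonneg (condensationRatio_pos m _).le _)
      (measurable_prod_condensationRatio_rpow n fun m => -e m).aestronglyMeasurable,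
    lintegral_prod_condensationRatio_rpow he, ENNReal.toReal_ofReal]
  exact Finset.prod_nonneg fun m hm =>
    div_nonneg Real.pi_pos.le (sub_pos.mpr (he m (Finset.mem_range.mp hm))).le

end Integration

/-- If `k·p₁ + (k−1)·p₂ + ⋯ + p_k > 2k−1` for every `1 ≤ k ≤ n`, then
`∫ ∏_{l=1}^n det(1 + B(x_l,…,x_n)B(x_l,…,x_n)*)^{-p_l} dλ
  = πⁿ ∏_{k=1}^n (k p₁ + (k−1) p₂ + ⋯ + p_k − (2k−1))⁻¹`. -/
theorem stmt0 (n : ℕ) (hn : 1 ≤ n) (p : ℕ → ℝ)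
    (hp : ∀ k, 1 ≤ k → k ≤ n →
      (∑ j ∈ Finset.range k, ((k : ℝ) - j) * p (j + 1)) > 2 * (k : ℝ) - 1) :
    (∫ x : Fin n → ℂ,
        ∏ l ∈ Finset.range n,
          ((1 + Bmat (subvec x l) * (Bmat (subvec x l))ᴴ).det).re ^ (-(p (l + 1))))
      = Real.pi ^ n *
        ∏ k ∈ Finset.range n,
          ((∑ j ∈ Finset.range (k + 1), (((k : ℝ) + 1) - j) * p (j + 1))
            - (2 * ((k : ℝ) + 1) - 1))⁻¹ := by
  let s (k : ℕ) := ∑ j ∈ Finset.range k, ((k : ℝ) - j) * p (j + 1)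
  have hintegrand (x : Fin n → ℂ) : ∏ l ∈ Finset.range n,
      ((1 + Bmat (subvec x l) * (Bmat (subvec x l))ᴴ).det).re ^ (-(p (l + 1))) =
      ∏ m ∈ Finset.range n, condensationRatio m (reverseSeq x) ^ (-s (n - m)) := by
    simp_rw [Bmat_subvec]
    exact prod_toeplitzGramDet_rpow n (fun l => p (l + 1)) (reverseSeq x)
  have hs (m : ℕ) (hm : m < n) : 2 * ((n : ℝ) - m) - 1 < s (n - m) := by
    simpa only [s, Nat.cast_sub hm.le] using hp (n - m) (Nat.sub_pos_of_lt hm) (n.sub_le m)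
  simp_rw [hintegrand]
  rw [integral_prod_condensationRatio_rpow hs, ← Finset.prod_range_reflect,
    ← Finset.card_range n, ← Finset.prod_const, Finset.card_range, ← Finset.prod_mul_distrib]
  refine Finset.prod_congr rfl fun k hk => ?_
  have hk' : k + 1 ≤ n := Finset.mem_range.mp hk
  have hreflect : n - (n - 1 - k) = k + 1 := by omega
  have hcast : ((n : ℝ) - (n - 1 - k : ℕ)) = k + 1 := by
    rw [← Nat.cast_sub (by omega), hreflect, Nat.cast_succ]
  rw [hcast, hreflect, div_eq_mul_inv]
  simp only [s, Nat.cast_succ]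
end

section
/- Let n ≥ 1 and let p be a real number. The function ℂ^n → ℝ, x ↦ det( I_n + B(x)·B(x)* )^{−p}, is integrable with respect to Lebesgue measure λ on ℂ^n if and only if p > 2 − 1/n. -/
open MeasureTheory Matrix

/-
Inverting the Toeplitz matrix, `B(x) ↦ B(x)⁻¹`, is an involution of `{x_n ≠ 0}` exchanging
`{|x_n| > 1}` with `{0 < |x_n| < 1}`. Its real Jacobian is `|x_n|^(-4n)` and it multiplies
`det (1 + B B*)` by `|x_n|^(-2n)`, so integrability over `{|x_n| > 1}` becomes integrability over
the punctured disc `{0 < |x_n| < 1}` with the weight `|x_n|^(2np - 4n)`. On `{|x_n| ≤ 1}` the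
diagonal `x_n` is a contraction, and dropping it costs a factor at most `3^n`: what remains is the
determinant in dimension `n - 1`. The condition is therefore `2np - 4n > -2` together with the
condition in dimension `n - 1`, which is weaker.
-/

section RCLikeDet

open scoped MatrixOrder ComplexOrder

variable {𝕜 ι : Type*} [RCLike 𝕜] [Fintype ι] [DecidableEq ι] {A B C : Matrix ι ι 𝕜}

theorem one_le_det (hA : 1 ≤ A) : 1 ≤ A.det := by
  have hH : A.IsHermitian := (nonneg_iff_posSemidef.1 (zero_le_one.trans hA)).isHermitian
  have hev (i : ι) : 1 ≤ hH.eigenvalues i :=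
    (algebraMap_le_iff_le_spectrum (r := (1 : ℝ)) (a := A) hH.isSelfAdjoint).1 (by simpa using hA) _
      (hH.eigenvalues_mem_spectrum_real i)
  rw [hH.det_eq_prod_eigenvalues]
  exact_mod_cast Finset.one_le_prod fun i _ => hev i

theorem det_le_det (hA : 0 ≤ A) (hAB : A ≤ B) : A.det ≤ B.det := by
  have hA' := nonneg_iff_posSemidef.1 hA
  by_cases hdet : A.det = 0
  · exact hdet ▸ (nonneg_iff_posSemidef.1 (hA.trans hAB)).det_nonneg
  obtain ⟨R, rfl⟩ := CStarAlgebra.nonneg_iff_eq_star_mul_self.1 hA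
  have hR : IsUnit R.det := by
    rw [det_mul] at hdet
    exact (right_ne_zero_of_mul hdet).isUnit
  have hC : 1 ≤ star R⁻¹ * B * R⁻¹ := by
    simpa [← mul_assoc, ← star_mul, mul_nonsing_inv_cancel_right _ _ hR, mul_nonsing_inv _ hR]
      using star_left_conjugate_le_conjugate hAB R⁻¹
  have hB : B = star R * (star R⁻¹ * B * R⁻¹) * R := by
    simp [← mul_assoc, ← star_mul, mul_assoc _ _ R, nonsing_inv_mul _ hR]
  calc (star R * R).det ≤ (star R * R).det * (star R⁻¹ * B * R⁻¹).det :=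
        le_mul_of_one_le_right hA'.det_nonneg (one_le_det hC)
    _ = B.det := by
      conv_rhs => rw [hB]
      simp only [det_mul]
      ring

theorem det_one_add_add_mul_conjTranspose_le (hC : C * Cᴴ ≤ 1) :
    (1 + (A + C) * (A + C)ᴴ).det ≤ 3 ^ Fintype.card ι * (1 + A * Aᴴ).det := by
  have hnonneg (M : Matrix ι ι 𝕜) : 0 ≤ M * Mᴴ :=
    (posSemidef_self_mul_conjTranspose M).nonneg
  rw [← det_smul]
  refine det_le_det (add_nonneg zero_le_one (hnonneg _)) (sub_nonneg.1 ?_)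
  have hdiff : (3 : 𝕜) • (1 + A * Aᴴ) - (1 + (A + C) * (A + C)ᴴ) =
      A * Aᴴ + (A - C) * (A - C)ᴴ + 2 • (1 - C * Cᴴ) := by
    simp only [conjTranspose_add, conjTranspose_sub, mul_add, add_mul, mul_sub, sub_mul]
    module
  rw [hdiff]
  exact add_nonneg (add_nonneg (hnonneg A) (hnonneg _)) (nsmul_nonneg (sub_nonneg.2 hC) 2)

theorem smul_one_mul_conjTranspose_le_one {c : 𝕜} (hc : ‖c‖ ≤ 1) :
    (c • (1 : Matrix ι ι 𝕜)) * (c • 1)ᴴ ≤ 1 := by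
  have hdiff : 1 - (c • (1 : Matrix ι ι 𝕜)) * (c • 1)ᴴ = ((1 - ‖c‖ ^ 2 : ℝ) : 𝕜) • 1 := by
    simp [sub_smul, smul_smul, RCLike.conj_mul]
  have hnonneg : (0 : 𝕜) ≤ ((1 - ‖c‖ ^ 2 : ℝ) : 𝕜) :=
    RCLike.ofReal_nonneg.2 (sub_nonneg.2 (pow_le_one₀ (norm_nonneg c) hc))
  rw [← sub_nonneg, hdiff]
  exact (PosSemidef.one.smul hnonneg).nonneg

end RCLikeDet

theorem det_one_add_mul_conjTranspose_eq_det_submatrix {R : Type*} [CommRing R] [StarRing R]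
    {m : ℕ} {A : Matrix (Fin (m + 1)) (Fin (m + 1)) R} (hrow : ∀ k, A 0 k = 0)
    (hcol : ∀ i, A i (Fin.last m) = 0) :
    (1 + A * Aᴴ).det = (1 + A.submatrix Fin.succ Fin.castSucc *
      (A.submatrix Fin.succ Fin.castSucc)ᴴ).det := by
  have hminor : (1 + A * Aᴴ).submatrix Fin.succ Fin.succ =
      1 + A.submatrix Fin.succ Fin.castSucc * (A.submatrix Fin.succ Fin.castSucc)ᴴ := by
    ext i j
    simp [mul_apply, Fin.sum_univ_castSucc, hcol, one_apply]
  rw [det_succ_row_zero, Fin.sum_univ_succ, ← hminor]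
  simp [mul_apply, hrow, one_apply, (Fin.succ_ne_zero _).symm]

theorem integrableOn_norm_rpow_ball_iff {E : Type*} [NormedAddCommGroup E] [NormedSpace ℝ E]
    [FiniteDimensional ℝ E] [Nontrivial E] [MeasurableSpace E] [BorelSpace E] (μ : Measure E)
    [μ.IsAddHaarMeasure] {r s : ℝ} (hr : 0 < r) :
    IntegrableOn (fun x : E => ‖x‖ ^ s) (Metric.ball 0 r) μ ↔ -(Module.finrank ℝ E : ℝ) < s := by
  have hdim : 1 ≤ Module.finrank ℝ E := Module.finrank_pos
  have hrpow : Set.EqOn (fun y : ℝ => y ^ (Module.finrank ℝ E - 1) • y ^ s)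
      (fun y => y ^ (Module.finrank ℝ E - 1 + s)) (Set.Ioo 0 r) := fun y hy => by
    simp only [smul_eq_mul, Real.rpow_add hy.1]
    rw [← Real.rpow_natCast, Nat.cast_pred hdim]
  rw [integrableOn_fun_norm_addHaar μ (f := (· ^ s)),
    integrableOn_congr_fun hrpow measurableSet_Ioo, intervalIntegral.integrableOn_Ioo_rpow_iff hr]
  constructor <;> intro h <;> linarith

theorem integrableOn_norm_rpow_punctured_ball_iff {s : ℝ} :
    IntegrableOn (fun z : ℂ => ‖z‖ ^ s) (Metric.ball 0 1 \ {0}) ↔ -2 < s := by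
  rw [integrableOn_congr_set_ae (sdiff_null_ae_eq_self (measure_singleton _)),
    integrableOn_norm_rpow_ball_iff volume one_pos, Complex.finrank_real_complex, Nat.cast_ofNat]

section Split

variable {m : ℕ} {α : Type*} [MeasureSpace α] [SigmaFinite (volume : Measure α)]

theorem integrableOn_last_init_iff {E : Type*} [NormedAddCommGroup E]
    {f : α × (Fin m → α) → E} {U : Set (α × (Fin m → α))} :
    IntegrableOn (fun x : Fin (m + 1) → α => f (x (Fin.last m), Fin.init x))
      {x | (x (Fin.last m), Fin.init x) ∈ U} ↔ IntegrableOn f U := by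
  rw [← (volume_preserving_piFinSuccAbove (fun _ => α) (Fin.last m)).integrableOn_comp_preimage
    (MeasurableEquiv.measurableEmbedding _)]
  simp only [Function.comp_def, MeasurableEquiv.piFinSuccAbove_apply, Fin.insertNthEquiv]
  simp [Set.preimage]

theorem integrableOn_last_mul_init {L : Type*} [NormedRing L] {f : α → L} {g : (Fin m → α) → L}
    {S : Set α} (hf : IntegrableOn f S) (hg : Integrable g) :
    IntegrableOn (fun x : Fin (m + 1) → α => f (x (Fin.last m)) * g (Fin.init x))
      {x | x (Fin.last m) ∈ S} := by
  have hprod : IntegrableOn (fun z : α × (Fin m → α) => f z.1 * g z.2) (S ×ˢ Set.univ) := by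
    rw [IntegrableOn, Measure.volume_eq_prod, ← Measure.prod_restrict, Measure.restrict_univ]
    exact Integrable.mul_prod hf hg
  simpa using integrableOn_last_init_iff.2 hprod

theorem integrableOn_last_iff {E : Type*} [NormedAddCommGroup E] {f : α → E} {S : Set α}
    {T : Set (Fin m → α)} (hT : volume T ≠ 0) (hT' : volume T ≠ ⊤) :
    IntegrableOn (fun x : Fin (m + 1) → α => f (x (Fin.last m)))
      {x | x (Fin.last m) ∈ S ∧ Fin.init x ∈ T} ↔ IntegrableOn f S := by
  have : IsFiniteMeasure (volume.restrict T) := ⟨by simpa using hT'.lt_top⟩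
  have hprod : IntegrableOn (fun z : α × (Fin m → α) => f z.1) (S ×ˢ T) ↔ IntegrableOn f S := by
    rw [IntegrableOn, Measure.volume_eq_prod, ← Measure.prod_restrict]
    exact Integrable.comp_fst_iff (by simpa using hT)
  simpa using integrableOn_last_init_iff.trans hprod

end Split

section Shift

variable {R : Type*} [CommRing R] {n m : ℕ}

/-- The nilpotent lower shift. The lower-triangular Toeplitz matrices are the polynomials in it,
equivalently the matrices commuting with it. -/
def shiftMatrix (R : Type*) [CommRing R] (n : ℕ) : Matrix (Fin n) (Fin n) R :=
  of fun i k => if (i : ℕ) = k + 1 then 1 else 0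

theorem shiftMatrix_apply (i j : Fin n) :
    shiftMatrix R n i j = if (i : ℕ) = j + 1 then 1 else 0 := rfl

theorem shiftMatrix_pow_apply (k : ℕ) (i j : Fin n) :
    (shiftMatrix R n ^ k) i j = if (i : ℕ) = j + k then 1 else 0 := by
  induction k generalizing i j with
  | zero => simp [one_apply, Fin.ext_iff]
  | succ k ih =>
    simp only [pow_succ, mul_apply, ih, shiftMatrix_apply, ite_zero_mul_ite_zero, mul_one]
    by_cases h : (i : ℕ) = j + (k + 1)
    · rw [if_pos h, Finset.sum_eq_single ⟨j + 1, by omega⟩ (by grind) (by simp),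
        if_pos ⟨by grind, rfl⟩]
    · rw [if_neg h]
      exact Finset.sum_eq_zero fun b _ => if_neg (by omega)

/-- The first column of a matrix, read from the bottom up so that `firstCol ℂ m (Bmat x) = x`. -/
def firstCol (R : Type*) [CommRing R] (m : ℕ) :
    Matrix (Fin (m + 1)) (Fin (m + 1)) R →ₗ[R] (Fin (m + 1) → R) where
  toFun M j := M j.rev 0
  map_add' _ _ := rfl
  map_smul' _ _ := rfl

variable {M N : Matrix (Fin (m + 1)) (Fin (m + 1)) R}

theorem firstCol_apply (j : Fin (m + 1)) : firstCol R m M j = M j.rev 0 := rfl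

theorem apply_eq_of_commute_shiftMatrix (hM : Commute M (shiftMatrix R (m + 1)))
    (i k : Fin (m + 1)) : M i k = (shiftMatrix R (m + 1) ^ (k : ℕ) * M) i 0 := by
  rw [← (hM.pow_right _).eq, mul_apply, Finset.sum_eq_single k]
  · simp [shiftMatrix_pow_apply]
  · intro b _ hb
    simp [shiftMatrix_pow_apply, Fin.val_inj, hb]
  · simp

theorem eq_of_commute_shiftMatrix_of_firstCol_eq (hM : Commute M (shiftMatrix R (m + 1)))
    (hN : Commute N (shiftMatrix R (m + 1))) (h : firstCol R m M = firstCol R m N) : M = N := by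
  have hcol (i : Fin (m + 1)) : M i 0 = N i 0 := by simpa [firstCol_apply] using congrFun h i.rev
  ext i k
  simp only [apply_eq_of_commute_shiftMatrix hM i k, apply_eq_of_commute_shiftMatrix hN i k,
    mul_apply, hcol]

end Shift

section Toeplitz

variable {n m : ℕ}

theorem Bmat_apply_of_lt {x : Fin n → ℂ} {i k : Fin n} (h : i < k) : Bmat x i k = 0 :=
  dif_neg (by simpa using h)

theorem Bmat_apply_self (x : Fin (m + 1) → ℂ) (i : Fin (m + 1)) :
    Bmat x i i = x (Fin.last m) := by
  rw [Bmat, dif_pos le_rfl]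
  congr 1
  ext
  simp only [Fin.val_last]
  omega

theorem submatrix_Bmat_sub_smul_one (x : Fin (m + 1) → ℂ) :
    (Bmat x - x (Fin.last m) • 1).submatrix Fin.succ Fin.castSucc = Bmat (Fin.init x) := by
  ext i k
  rcases lt_trichotomy (k : ℕ) (i + 1) with hk | hk | hk
  · have hne : i.succ ≠ k.castSucc := by simpa [Fin.ext_iff] using hk.ne'
    simp only [submatrix_apply, Matrix.sub_apply, Matrix.smul_apply, one_apply_ne hne, smul_zero,
      sub_zero, Bmat, Fin.val_succ, Fin.val_castSucc]
    rw [dif_pos hk.le, dif_pos (by omega), Fin.init]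
    congr 1
    ext
    simp only [Fin.castSucc_mk]
    omega
  · have heq : i.succ = k.castSucc := by simpa [Fin.ext_iff] using hk.symm
    rw [Bmat_apply_of_lt (by omega)]
    simp [heq, Bmat_apply_self]
  · have hlt : i.succ < k.castSucc := by simpa [Fin.lt_def] using hk
    rw [Bmat_apply_of_lt (by omega)]
    simp [Bmat_apply_of_lt hlt, one_apply_ne hlt.ne]

theorem Bmat_eq_sum (x : Fin n → ℂ) :
    Bmat x = ∑ j, x j • shiftMatrix ℂ n ^ (j.rev : ℕ) := by
  ext i k
  simp only [Bmat, Matrix.sum_apply, Matrix.smul_apply, shiftMatrix_pow_apply, smul_eq_mul,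
    mul_ite, mul_one, mul_zero, Fin.val_rev]
  split_ifs with h
  · rw [Finset.sum_eq_single ⟨n - 1 - i + k, by omega⟩ (by grind) (by simp),
      if_pos (by grind)]
  · exact (Finset.sum_eq_zero fun j _ => if_neg (by omega)).symm

theorem isLinearMap_Bmat : IsLinearMap ℂ (Bmat (N := n)) where
  map_add x y := by simp [Bmat_eq_sum, add_smul, Finset.sum_add_distrib]
  map_smul c x := by simp [Bmat_eq_sum, mul_smul, Finset.smul_sum]

theorem continuous_Bmat : Continuous (Bmat (N := n)) :=
  (isLinearMap_Bmat.mk' Bmat).continuous_of_finiteDimensional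

theorem commute_Bmat_of_commute_shiftMatrix {M : Matrix (Fin n) (Fin n) ℂ}
    (hM : Commute M (shiftMatrix ℂ n)) (x : Fin n → ℂ) : Commute M (Bmat x) := by
  rw [Bmat_eq_sum]
  exact Commute.sum_right _ _ _ fun j _ => (hM.pow_right _).smul_right _

theorem commute_Bmat_shiftMatrix (x : Fin n → ℂ) : Commute (Bmat x) (shiftMatrix ℂ n) :=
  (commute_Bmat_of_commute_shiftMatrix (Commute.refl _) x).symm

theorem det_Bmat (x : Fin (m + 1) → ℂ) : (Bmat x).det = x (Fin.last m) ^ (m + 1) := by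
  rw [det_of_isLowerTriangular _ fun i k hik => Bmat_apply_of_lt hik]
  simp [Bmat_apply_self]

theorem firstCol_Bmat (x : Fin (m + 1) → ℂ) : firstCol ℂ m (Bmat x) = x := by
  ext j
  rw [firstCol_apply, Bmat, dif_pos (by simp)]
  congr 1
  ext
  simp only [Fin.val_rev, Fin.val_zero]
  omega

theorem Bmat_firstCol {M : Matrix (Fin (m + 1)) (Fin (m + 1)) ℂ}
    (hM : Commute M (shiftMatrix ℂ (m + 1))) : Bmat (firstCol ℂ m M) = M :=
  eq_of_commute_shiftMatrix_of_firstCol_eq (commute_Bmat_shiftMatrix _) hM (firstCol_Bmat _)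

theorem firstCol_mul_Bmat (M : Matrix (Fin (m + 1)) (Fin (m + 1)) ℂ) (h : Fin (m + 1) → ℂ) :
    firstCol ℂ m (M * Bmat h) = M.submatrix Fin.rev Fin.rev *ᵥ h := by
  ext j
  conv_rhs => rw [← firstCol_Bmat h]
  simp only [firstCol_apply, mul_apply, mulVec, dotProduct, submatrix_apply]
  exact (Equiv.sum_comp Fin.revPerm _).symm

theorem isUnit_det_Bmat {x : Fin (m + 1) → ℂ} (hx : x (Fin.last m) ≠ 0) :
    IsUnit (Bmat x).det := by
  rw [det_Bmat]
  exact hx.isUnit.pow _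

/-- The inversion `B(x) ↦ B(x)⁻¹` of Toeplitz matrices in the coordinates `x`, meaningful only when
`x (Fin.last m) ≠ 0`. -/
noncomputable def toeplitzInv (x : Fin (m + 1) → ℂ) : Fin (m + 1) → ℂ :=
  firstCol ℂ m (Bmat x)⁻¹

variable {x : Fin (m + 1) → ℂ}

theorem commute_Bmat_inv_shiftMatrix (hx : x (Fin.last m) ≠ 0) :
    Commute (Bmat x)⁻¹ (shiftMatrix ℂ (m + 1)) := by
  obtain ⟨u, hu⟩ := (isUnit_iff_isUnit_det _).2 (isUnit_det_Bmat hx)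
  rw [← hu, ← coe_units_inv]
  exact Commute.units_inv_left (hu ▸ commute_Bmat_shiftMatrix x)

theorem Bmat_toeplitzInv (hx : x (Fin.last m) ≠ 0) : Bmat (toeplitzInv x) = (Bmat x)⁻¹ :=
  Bmat_firstCol (commute_Bmat_inv_shiftMatrix hx)

theorem toeplitzInv_toeplitzInv (hx : x (Fin.last m) ≠ 0) : toeplitzInv (toeplitzInv x) = x := by
  have hdet := isUnit_det_Bmat hx
  rw [toeplitzInv, Bmat_toeplitzInv hx, nonsing_inv_nonsing_inv _ hdet, firstCol_Bmat]

theorem toeplitzInv_last (hx : x (Fin.last m) ≠ 0) :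
    toeplitzInv x (Fin.last m) = (x (Fin.last m))⁻¹ := by
  have hdet := isUnit_det_Bmat hx
  refine eq_inv_of_mul_eq_one_right ?_
  calc x (Fin.last m) * toeplitzInv x (Fin.last m)
      = (Bmat x * Bmat (toeplitzInv x)) 0 0 := by
        rw [mul_apply, Fin.sum_univ_succ]
        simp [Bmat_apply_self, Bmat_apply_of_lt]
    _ = 1 := by rw [Bmat_toeplitzInv hx, mul_nonsing_inv _ hdet, one_apply_eq]

/-- The derivative `h ↦ -B(x)⁻¹ B(h) B(x)⁻¹` of `toeplitzInv`, as a matrix acting on `h`: the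
reversal of the indices comes from `firstCol`. -/
noncomputable def toeplitzInvDeriv (x : Fin (m + 1) → ℂ) :
    (Fin (m + 1) → ℂ) →L[ℂ] (Fin (m + 1) → ℂ) :=
  (toLin' (-((Bmat x)⁻¹ * (Bmat x)⁻¹).submatrix Fin.rev Fin.rev)).toContinuousLinearMap

theorem toeplitzInvDeriv_apply (hx : x (Fin.last m) ≠ 0) (h : Fin (m + 1) → ℂ) :
    toeplitzInvDeriv x h = -firstCol ℂ m ((Bmat x)⁻¹ * Bmat h * (Bmat x)⁻¹) := by
  have hcomm : Commute (Bmat x)⁻¹ (Bmat h) :=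
    commute_Bmat_of_commute_shiftMatrix (commute_Bmat_inv_shiftMatrix hx) h
  rw [mul_assoc, ← hcomm.eq, ← mul_assoc, firstCol_mul_Bmat]
  simp [toeplitzInvDeriv]

section

attribute [local instance] Matrix.linftyOpNormedRing Matrix.linftyOpNormedAlgebra

theorem hasFDerivAt_toeplitzInv (hx : x (Fin.last m) ≠ 0) :
    HasFDerivAt toeplitzInv (toeplitzInvDeriv x) x := by
  obtain ⟨u, hu⟩ := (isUnit_iff_isUnit_det _).2 (isUnit_det_Bmat hx)
  have hB : HasFDerivAt Bmat (isLinearMap_Bmat.mk' Bmat).toContinuousLinearMap x :=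
    (isLinearMap_Bmat.mk' Bmat).toContinuousLinearMap.hasFDerivAt
  have hinv := hasFDerivAt_ringInverse (𝕜 := ℂ) u
  rw [hu] at hinv
  have hcol := (firstCol ℂ m).toContinuousLinearMap.hasFDerivAt (x := Ring.inverse (Bmat x))
  have hcomp := hcol.comp x (hinv.comp x hB)
  have hfun : toeplitzInv = firstCol ℂ m ∘ Ring.inverse ∘ Bmat := by
    ext1 y
    simp [toeplitzInv, nonsing_inv_eq_ringInverse]
  rw [hfun]
  refine hcomp.congr_fderiv (ContinuousLinearMap.ext fun h => ?_)
  rw [toeplitzInvDeriv_apply hx, ← hu, ← coe_units_inv]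
  rfl

end

theorem abs_det_toeplitzInvDeriv (x : Fin (m + 1) → ℂ) :
    |((toeplitzInvDeriv x).restrictScalars ℝ).det| =
      (‖x (Fin.last m)‖ ^ (4 * (m + 1)))⁻¹ := by
  have hrev : (((Bmat x)⁻¹ * (Bmat x)⁻¹).submatrix Fin.rev Fin.rev).det =
      ((Bmat x)⁻¹ * (Bmat x)⁻¹).det := det_submatrix_equiv_self Fin.revPerm _
  calc |((toeplitzInvDeriv x).restrictScalars ℝ).det|
      = ‖(toLin' (-((Bmat x)⁻¹ * (Bmat x)⁻¹).submatrix Fin.rev Fin.rev)).det‖ ^ 2 := by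
        rw [← Complex.normSq_eq_norm_sq, ← abs_of_nonneg (Complex.normSq_nonneg _),
          ← Algebra.norm_complex_apply, ← LinearMap.det_restrictScalars]
        rfl
    _ = (‖x (Fin.last m)‖ ^ (4 * (m + 1)))⁻¹ := by
        rw [LinearMap.det_toLin', det_neg, hrev, det_mul, det_nonsing_inv, det_Bmat]
        simp only [norm_mul, norm_pow, norm_neg, norm_one, Ring.inverse_eq_inv', norm_inv]
        ring

end Toeplitz

section ToeplitzDet

variable {n m : ℕ}

/-- The real number `det (1 + B(x) B(x)ᴴ)`; that determinant has no imaginary part. -/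
noncomputable def toeplitzDet (x : Fin n → ℂ) : ℝ := ((1 + Bmat x * (Bmat x)ᴴ).det).re

theorem continuous_toeplitzDet : Continuous (toeplitzDet (n := n)) := by
  unfold toeplitzDet
  have := continuous_Bmat (n := n)
  fun_prop

theorem one_le_toeplitzDet (x : Fin n → ℂ) : 1 ≤ toeplitzDet x := by
  open scoped MatrixOrder ComplexOrder in
  exact (Complex.le_def.1 (one_le_det (le_add_of_nonneg_right
    (posSemidef_self_mul_conjTranspose (Bmat x)).nonneg))).1

theorem toeplitzDet_pos (x : Fin n → ℂ) : 0 < toeplitzDet x :=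
  zero_lt_one.trans_le (one_le_toeplitzDet x)

theorem continuous_toeplitzDet_rpow (q : ℝ) :
    Continuous fun x : Fin n → ℂ => toeplitzDet x ^ q :=
  continuous_toeplitzDet.rpow_const fun x => Or.inl (toeplitzDet_pos x).ne'

theorem toeplitzDet_toeplitzInv {x : Fin (m + 1) → ℂ} (hx : x (Fin.last m) ≠ 0) :
    toeplitzDet (toeplitzInv x) = (‖x (Fin.last m)‖ ^ (2 * (m + 1)))⁻¹ * toeplitzDet x := by
  have hdet := isUnit_det_Bmat hx
  have hfactor : 1 + Bmat x * (Bmat x)ᴴ =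
      Bmat x * (1 + Bmat (toeplitzInv x) * (Bmat (toeplitzInv x))ᴴ) * (Bmat x)ᴴ := by
    rw [Bmat_toeplitzInv hx, mul_add, add_mul, mul_one, ← mul_assoc, mul_nonsing_inv _ hdet,
      one_mul, ← conjTranspose_mul, mul_nonsing_inv _ hdet, conjTranspose_one,
      add_comm (_ * _)]
  rw [eq_inv_mul_iff_mul_eq₀ (by simpa using hx)]
  conv_rhs => rw [toeplitzDet, hfactor, det_mul, det_mul, det_conjTranspose, det_Bmat,
    mul_right_comm, RCLike.star_def, Complex.mul_conj, Complex.re_ofReal_mul,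
    Complex.normSq_eq_norm_sq, norm_pow, ← toeplitzDet]
  ring

theorem toeplitzDet_init_le {x : Fin (m + 1) → ℂ} (hx : ‖x (Fin.last m)‖ ≤ 1) :
    toeplitzDet (Fin.init x) ≤ 3 ^ (m + 1) * toeplitzDet x := by
  have hrow (k : Fin (m + 1)) : (Bmat x - x (Fin.last m) • 1) 0 k = 0 := by
    rcases k.zero_le.eq_or_lt with rfl | hk
    · simp [Bmat_apply_self]
    · simp [Bmat_apply_of_lt hk, hk.ne]
  have hcol (i : Fin (m + 1)) : (Bmat x - x (Fin.last m) • 1) i (Fin.last m) = 0 := by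
    rcases (Fin.le_last i).eq_or_lt with rfl | hi
    · simp [Bmat_apply_self]
    · simp [Bmat_apply_of_lt hi, hi.ne]
  have hle := det_one_add_add_mul_conjTranspose_le (A := Bmat x)
    (smul_one_mul_conjTranspose_le_one (norm_neg (x (Fin.last m)) ▸ hx))
  rw [neg_smul, ← sub_eq_add_neg, Fintype.card_fin,
    det_one_add_mul_conjTranspose_eq_det_submatrix hrow hcol,
    submatrix_Bmat_sub_smul_one] at hle
  have hre : (3 ^ (m + 1) * (1 + Bmat x * (Bmat x)ᴴ).det).re = 3 ^ (m + 1) * toeplitzDet x := by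
    rw [toeplitzDet, ← Complex.re_ofReal_mul]
    norm_cast
  exact (Complex.le_def.1 hle).1.trans_eq hre

theorem toeplitzDet_init_rpow_mul_rpow_neg_le {p : ℝ} (hp : 0 ≤ p) {x : Fin (m + 1) → ℂ}
    (hx : ‖x (Fin.last m)‖ ≤ 1) :
    toeplitzDet (Fin.init x) ^ p * toeplitzDet x ^ (-p) ≤ (3 ^ (m + 1)) ^ p := by
  have hpos := toeplitzDet_pos x
  rw [Real.rpow_neg hpos.le, ← div_eq_mul_inv, ← Real.div_rpow (toeplitzDet_pos _).le hpos.le]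
  exact Real.rpow_le_rpow (div_pos (toeplitzDet_pos _) hpos).le
    ((div_le_iff₀ hpos).2 (toeplitzDet_init_le hx)) hp

end ToeplitzDet

section Integrability

variable {m : ℕ}

theorem image_toeplitzInv :
    toeplitzInv '' {y : Fin (m + 1) → ℂ | y (Fin.last m) ∈ Metric.ball 0 1 \ {0}} =
      {x | 1 < ‖x (Fin.last m)‖} := by
  ext x
  constructor
  · rintro ⟨y, ⟨hy, hy0 : y (Fin.last m) ≠ 0⟩, rfl⟩
    rw [Set.mem_ofPred_eq, toeplitzInv_last hy0, norm_inv]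
    exact (one_lt_inv₀ (norm_pos_iff.2 hy0)).2 (by simpa using hy)
  · intro hx
    have hx0 : x (Fin.last m) ≠ 0 := norm_pos_iff.1 (zero_lt_one.trans hx)
    refine ⟨toeplitzInv x, ?_, toeplitzInv_toeplitzInv hx0⟩
    simpa [toeplitzInv_last hx0] using ⟨inv_lt_one_of_one_lt₀ hx, hx0⟩

theorem integrableOn_toeplitzDet_rpow_neg_iff (p : ℝ) :
    IntegrableOn (fun x => toeplitzDet x ^ (-p)) {x : Fin (m + 1) → ℂ | 1 < ‖x (Fin.last m)‖} ↔
      IntegrableOn (fun y => ‖y (Fin.last m)‖ ^ (2 * (m + 1) * p - 4 * (m + 1)) *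
        toeplitzDet y ^ (-p)) {y : Fin (m + 1) → ℂ | y (Fin.last m) ∈ Metric.ball 0 1 \ {0}} := by
  have hmeas : MeasurableSet {y : Fin (m + 1) → ℂ | y (Fin.last m) ∈ Metric.ball 0 1 \ {0}} :=
    measurable_pi_apply _ (measurableSet_ball.diff (measurableSet_singleton 0))
  have hderiv : ∀ y ∈ {y : Fin (m + 1) → ℂ | y (Fin.last m) ∈ Metric.ball 0 1 \ {0}},
      HasFDerivWithinAt toeplitzInv ((toeplitzInvDeriv y).restrictScalars ℝ)
        {y | y (Fin.last m) ∈ Metric.ball 0 1 \ {0}} y :=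
    fun y hy => ((hasFDerivAt_toeplitzInv hy.2).restrictScalars ℝ).hasFDerivWithinAt
  have hinj : Set.InjOn (toeplitzInv (m := m)) {y | y (Fin.last m) ∈ Metric.ball 0 1 \ {0}} :=
    Set.LeftInvOn.injOn (f₁' := toeplitzInv) fun y hy => toeplitzInv_toeplitzInv hy.2
  rw [← image_toeplitzInv,
    integrableOn_image_iff_integrableOn_abs_det_fderiv_smul volume hmeas hderiv hinj]
  refine integrableOn_congr_fun (fun y hy => ?_) hmeas
  have hy0 : 0 < ‖y (Fin.last m)‖ := norm_pos_iff.2 hy.2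
  have hexp : (2 * (m + 1) * p - 4 * (m + 1) : ℝ) =
      -((4 * (m + 1) : ℕ) : ℝ) + -((2 * (m + 1) : ℕ) : ℝ) * (-p) := by push_cast; ring
  simp only [abs_det_toeplitzInvDeriv, toeplitzDet_toeplitzInv hy.2, smul_eq_mul]
  rw [Real.mul_rpow (by positivity) (toeplitzDet_pos y).le, hexp, Real.rpow_add hy0,
    Real.rpow_mul hy0.le, Real.rpow_neg hy0.le, Real.rpow_neg hy0.le, Real.rpow_natCast,
    Real.rpow_natCast, mul_assoc]

section Weight

variable {w : ℂ → ℝ} {S : Set ℂ} {p : ℝ}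

theorem integrableOn_mul_toeplitzDet_rpow_neg (hS : MeasurableSet S)
    (hS1 : S ⊆ Metric.closedBall 0 1) (hp : 0 ≤ p) (hw : IntegrableOn w S)
    (hint : Integrable fun x : Fin m → ℂ => toeplitzDet x ^ (-p)) :
    IntegrableOn (fun x => w (x (Fin.last m)) * toeplitzDet x ^ (-p))
      {x : Fin (m + 1) → ℂ | x (Fin.last m) ∈ S} := by
  have hmeas : MeasurableSet {x : Fin (m + 1) → ℂ | x (Fin.last m) ∈ S} :=
    measurable_pi_apply _ hS
  have hratio : Continuous fun x : Fin (m + 1) → ℂ =>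
      toeplitzDet (Fin.init x) ^ p * toeplitzDet x ^ (-p) :=
    ((continuous_toeplitzDet_rpow p).comp (continuous_id.finInit)).mul
      (continuous_toeplitzDet_rpow (-p))
  have hbound : ∀ x ∈ {x : Fin (m + 1) → ℂ | x (Fin.last m) ∈ S},
      ‖toeplitzDet (Fin.init x) ^ p * toeplitzDet x ^ (-p)‖ ≤ (3 ^ (m + 1)) ^ p := fun x hx => by
    rw [Real.norm_of_nonneg (mul_nonneg (Real.rpow_nonneg (toeplitzDet_pos _).le _)
      (Real.rpow_nonneg (toeplitzDet_pos _).le _))]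
    exact toeplitzDet_init_rpow_mul_rpow_neg_le hp (by simpa using hS1 hx)
  refine IntegrableOn.congr_fun ((integrableOn_last_mul_init hw hint).mul_bdd
    hratio.aestronglyMeasurable (ae_restrict_of_forall_mem hmeas hbound)) (fun x _ => ?_) hmeas
  have := Real.rpow_add (toeplitzDet_pos (Fin.init x)) (-p) p
  rw [neg_add_cancel, Real.rpow_zero] at this
  rw [mul_assoc, ← mul_assoc (_ ^ (-p)), ← this, one_mul]

theorem integrableOn_of_integrableOn_mul_toeplitzDet_rpow_neg (hS : MeasurableSet S)
    (hS1 : S ⊆ Metric.closedBall 0 1)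
    (hint : IntegrableOn (fun x => w (x (Fin.last m)) * toeplitzDet x ^ (-p))
      {x : Fin (m + 1) → ℂ | x (Fin.last m) ∈ S}) : IntegrableOn w S := by
  have hvol : volume (Metric.closedBall (0 : Fin m → ℂ) 1) ≠ 0 :=
    (Metric.measure_closedBall_pos volume 0 one_pos).ne'
  rw [← integrableOn_last_iff hvol measure_closedBall_lt_top.ne]
  have hinit : Measurable (Fin.init : (Fin (m + 1) → ℂ) → Fin m → ℂ) :=
    continuous_id.finInit.measurable
  have hmeas : MeasurableSet {x : Fin (m + 1) → ℂ |
      x (Fin.last m) ∈ S ∧ Fin.init x ∈ Metric.closedBall 0 1} :=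
    (hS.preimage (measurable_pi_apply _)).inter (measurableSet_closedBall.preimage hinit)
  have hsub : {x : Fin (m + 1) → ℂ | x (Fin.last m) ∈ S ∧ Fin.init x ∈ Metric.closedBall 0 1} ⊆
      Metric.closedBall 0 1 := fun x hx => by
    rw [mem_closedBall_zero_iff, pi_norm_le_iff_of_nonneg zero_le_one]
    refine Fin.lastCases (by simpa using hS1 hx.1) fun i => ?_
    exact (norm_le_pi_norm (Fin.init x) i).trans (by simpa using hx.2)
  refine ((hint.mono_set fun x hx => hx.1).mul_continuousOn_of_subset
    (continuous_toeplitzDet_rpow p).continuousOn hmeas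
    (isCompact_closedBall 0 1) hsub).congr_fun (fun x _ => ?_) hmeas
  simp [mul_assoc, ← Real.rpow_add (toeplitzDet_pos x)]

end Weight

theorem integrable_toeplitzDet_rpow_neg {p : ℝ} (hp : 0 ≤ p) (hmp : 2 * (m : ℝ) - 1 < m * p) :
    Integrable fun x : Fin m → ℂ => toeplitzDet x ^ (-p) := by
  induction m with
  | zero => exact .of_finite
  | succ m ih =>
    push_cast at hmp
    have hint := ih (by nlinarith)
    have hpunct : Metric.ball (0 : ℂ) 1 \ {0} ⊆ Metric.closedBall 0 1 :=
      Set.sdiff_subset.trans Metric.ball_subset_closedBall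
    have hlarge : IntegrableOn (fun x => toeplitzDet x ^ (-p))
        {x : Fin (m + 1) → ℂ | 1 < ‖x (Fin.last m)‖} :=
      (integrableOn_toeplitzDet_rpow_neg_iff p).2 <|
        integrableOn_mul_toeplitzDet_rpow_neg (measurableSet_ball.diff (measurableSet_singleton 0))
          hpunct hp (integrableOn_norm_rpow_punctured_ball_iff.2 (by linarith)) hint
    have hsmall : IntegrableOn (fun x => toeplitzDet x ^ (-p))
        {x : Fin (m + 1) → ℂ | x (Fin.last m) ∈ Metric.closedBall 0 1} := by
      simpa using integrableOn_mul_toeplitzDet_rpow_neg (w := 1) measurableSet_closedBall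
        subset_rfl hp (integrableOn_const measure_closedBall_lt_top.ne) hint
    rw [← integrableOn_univ]
    convert! hlarge.union hsmall
    ext x
    simp [lt_or_ge]

theorem lt_of_integrable_toeplitzDet_rpow_neg {p : ℝ}
    (hint : Integrable fun x : Fin (m + 1) → ℂ => toeplitzDet x ^ (-p)) :
    2 * ((m : ℝ) + 1) - 1 < (m + 1) * p := by
  have hweight := integrableOn_of_integrableOn_mul_toeplitzDet_rpow_neg
    (w := fun z => ‖z‖ ^ (2 * (m + 1) * p - 4 * (m + 1)))
    (measurableSet_ball.diff (measurableSet_singleton 0))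
    (Set.sdiff_subset.trans Metric.ball_subset_closedBall)
    ((integrableOn_toeplitzDet_rpow_neg_iff p).1 hint.integrableOn)
  linarith [integrableOn_norm_rpow_punctured_ball_iff.1 hweight]

end Integrability

/-- `x ↦ det(1 + B(x)B(x)*)^{-p}` is Lebesgue-integrable on `ℂⁿ` iff `p > 2 − 1/n`. -/
theorem stmt1 (n : ℕ) (hn : 1 ≤ n) (p : ℝ) :
    Integrable (fun x : Fin n → ℂ => ((1 + Bmat x * (Bmat x)ᴴ).det).re ^ (-p)) volume
      ↔ p > 2 - 1 / (n : ℝ) := by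
  have hn' : (1 : ℝ) ≤ n := by exact_mod_cast hn
  have hiff : p > 2 - 1 / (n : ℝ) ↔ 2 * (n : ℝ) - 1 < n * p := by
    rw [gt_iff_lt, show 2 - 1 / (n : ℝ) = (2 * n - 1) / n by field_simp,
      div_lt_iff₀' (by positivity)]
  rw [hiff]
  refine ⟨fun hint => ?_, fun h => integrable_toeplitzDet_rpow_neg (by nlinarith) h⟩
  obtain ⟨m, rfl⟩ := Nat.exists_eq_add_of_le' hn
  exact_mod_cast lt_of_integrable_toeplitzDet_rpow_neg hint
end

section
/- Let n ≥ 1 and define W_n ∈ M₂(ℂ[z, z⁻¹]) by W_n = (z^m, 0; 0, z^{−m}) if n = 2m is even, and W_n = (0, z^{−m−1}; z^{m+1}, 0) if n = 2m+1 is odd. Let v ∈ M₂(ℂ[z, z⁻¹]) with det v = 1 and suppose: (i) every entry of v has only terms of nonpositive degree in z, the z⁰-coefficients of both diagonal entries of v equal 1, and the z⁰-coefficient of the upper-right entry of v equals 0; (ii) every entry of W_n · v · W_n^{−1} has only terms of nonnegative degree in z, the z⁰-coefficients of both diagonal entries of W_n · v · W_n^{−1} equal 1, and the z⁰-coefficient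 of its lower-left entry equals 0. Then v = (1, Σ_{j=1}^{n} x_j z^{−j}; 0, 1) for some (unique) x_1, …, x_n ∈ ℂ. Conversely, every matrix of this form has determinant 1 and satisfies (i) and (ii). -/
open Matrix

/-- `W_n`: the diagonal (resp. antidiagonal) representative `diag(z^m, z^{-m})` for `n = 2m`
and `(0, z^{-m-1}; z^{m+1}, 0)` for `n = 2m+1`, as a matrix over Laurent series. -/
noncomputable def Wmat (n : ℕ) : Matrix (Fin 2) (Fin 2) (LaurentSeries ℂ) :=
  if n % 2 = 0 then
    !![HahnSeries.single ((n / 2 : ℕ) : ℤ) 1, 0;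
       0, HahnSeries.single (-((n / 2 : ℕ) : ℤ)) 1]
  else
    !![0, HahnSeries.single (-((n / 2 : ℕ) : ℤ) - 1) 1;
       HahnSeries.single (((n / 2 : ℕ) : ℤ) + 1) 1, 0]

/-
Conjugation by `W_n` preserves or exchanges the two diagonal entries, and it multiplies the
upper-right entry of `v` by `z^n` and the lower-left one by `z^{-n}` (`n` even), or moves them to
the opposite corner with factors `z^{n+1}` and `z^{-n-1}` (`n` odd). In the odd case the strict
and the weak vanishing conditions of the two corners are exchanged as well, which absorbs the extra
shift: for both parities `W_n v W_n⁻¹` lies in `N⁺` exactly when the diagonal entries of `v` are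
`1` plus terms of positive degree, `v₀₁` lives in degrees `≥ -n` and `v₁₀` in degrees `> n`.
Against the nonpositive degrees imposed by `N⁻`, this leaves only the degrees `-n, …, -1` of `v₀₁`.
-/

open HahnSeries

lemma existsUnique_and_left {α : Sort*} {p : Prop} {q : α → Prop} :
    (∃! x, p ∧ q x) ↔ p ∧ ∃! x, q x := by
  by_cases hp : p <;> simp [hp]

section FinTwo

variable {A : Type*} [CommRing A] {p q : A}

lemma diag_conj_fin_two (h : p * q = 1) (u : Matrix (Fin 2) (Fin 2) A) :
    !![p, 0; 0, q] * u * !![p, 0; 0, q]⁻¹ =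
      !![u 0 0, p ^ 2 * u 0 1; q ^ 2 * u 1 0, u 1 1] := by
  have inv_eq : !![p, 0; 0, q]⁻¹ = !![q, 0; 0, p] :=
    inv_eq_right_inv (by simp [one_fin_two, h, mul_comm q p])
  rw [inv_eq, eta_fin_two u, mul_fin_two, mul_fin_two]
  congr! 4 <;> simp only [of_apply, cons_val', cons_val_zero, cons_val_one, cons_val_fin_one] <;>
    grind

lemma antidiag_conj_fin_two (h : p * q = 1) (u : Matrix (Fin 2) (Fin 2) A) :
    !![0, q; p, 0] * u * !![0, q; p, 0]⁻¹ =
      !![u 1 1, q ^ 2 * u 1 0; p ^ 2 * u 0 1, u 0 0] := by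
  have inv_eq : !![0, q; p, 0]⁻¹ = !![0, q; p, 0] :=
    inv_eq_right_inv (by simp [one_fin_two, h, mul_comm q p])
  rw [inv_eq, eta_fin_two u, mul_fin_two, mul_fin_two]
  congr! 4 <;> simp only [of_apply, cons_val', cons_val_zero, cons_val_one, cons_val_fin_one] <;>
    grind

lemma eq_upper_unitriangular_iff {v : Matrix (Fin 2) (Fin 2) A} {a : A} :
    v = !![1, a; 0, 1] ↔ v 0 0 = 1 ∧ v 1 1 = 1 ∧ v 1 0 = 0 ∧ v 0 1 = a := by
  simp only [← Matrix.ext_iff, Fin.forall_fin_two, of_apply, cons_val', cons_val_zero, cons_val_one,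
    cons_val_fin_one]
  tauto

end FinTwo

section SumSingle

variable {Γ M ι : Type*} [PartialOrder Γ] [AddCommMonoid M] [Fintype ι] {e : ι → Γ}

lemma coeff_sum_single_apply (he : Function.Injective e) (x : ι → M) (i : ι) :
    (∑ j, single (e j) (x j) : HahnSeries Γ M).coeff (e i) = x i := by
  classical
  simp [coeff_sum, coeff_single, he.eq_iff]

lemma coeff_sum_single_of_notMem_range (x : ι → M) {k : Γ} (hk : k ∉ Set.range e) :
    (∑ j, single (e j) (x j) : HahnSeries Γ M).coeff k = 0 := by
  rw [coeff_sum]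
  exact Finset.sum_eq_zero fun j _ ↦ coeff_single_of_ne fun hj ↦ hk ⟨j, hj.symm⟩

lemma existsUnique_eq_sum_single_iff (he : Function.Injective e) (f : HahnSeries Γ M) :
    (∃! x : ι → M, f = ∑ j, single (e j) (x j)) ↔ ∀ k ∉ Set.range e, f.coeff k = 0 := by
  refine ⟨?_, fun hf ↦ ⟨fun j ↦ f.coeff (e j), ?_, ?_⟩⟩
  · rintro ⟨x, rfl, -⟩ k hk
    exact coeff_sum_single_of_notMem_range x hk
  · ext k
    by_cases hk : k ∈ Set.range e
    · obtain ⟨i, rfl⟩ := hk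
      exact (coeff_sum_single_apply he (fun j ↦ f.coeff (e j)) i).symm
    · rw [hf k hk, coeff_sum_single_of_notMem_range _ hk]
  · rintro x rfl
    exact funext fun i ↦ (coeff_sum_single_apply he x i).symm

end SumSingle

section ShiftedVanishing

variable {Γ S : Type*} [AddCommGroup Γ] [PartialOrder Γ] [IsOrderedAddMonoid Γ] [Semiring S]
  {f : HahnSeries Γ S} {a b : Γ}

lemma forall_lt_coeff_single_mul_eq_zero_iff :
    (∀ k, k < b → (single a 1 * f).coeff k = 0) ↔ ∀ k, k < b - a → f.coeff k = 0 :=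
  (Equiv.subRight a).forall_congr fun {k} ↦ by simp [coeff_single_mul]

lemma forall_le_coeff_single_mul_eq_zero_iff :
    (∀ k, k ≤ b → (single a 1 * f).coeff k = 0) ↔ ∀ k, k ≤ b - a → f.coeff k = 0 :=
  (Equiv.subRight a).forall_congr fun {k} ↦ by simp [coeff_single_mul]

end ShiftedVanishing

lemma notMem_range_neg_sub_one_iff {n : ℕ} {k : ℤ} :
    k ∉ Set.range (fun j : Fin n ↦ -((j : ℕ) : ℤ) - 1) ↔ k < -n ∨ 0 ≤ k := by
  rw [Set.mem_range, not_iff_comm, not_or, not_lt, not_le]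
  constructor
  · rintro ⟨hlow, hneg⟩
    exact ⟨⟨(-k - 1).toNat, by lia⟩, by grind⟩
  · rintro ⟨j, rfl⟩
    have := j.isLt
    lia

section LoopGroup

variable {R : Type*} [CommRing R]

/-- The condition defining the subgroup `N⁻` of the loop group of `SL₂`: `v` has no terms of
positive degree and is lower unitriangular at `z = ∞`. The determinant is not prescribed. -/
def IsLoopNMinus (v : Matrix (Fin 2) (Fin 2) (LaurentSeries R)) : Prop :=
  (∀ i j : Fin 2, ∀ k : ℤ, 0 < k → (v i j).coeff k = 0) ∧
    (v 0 0).coeff 0 = 1 ∧ (v 1 1).coeff 0 = 1 ∧ (v 0 1).coeff 0 = 0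

/-- The condition defining the subgroup `N⁺` of the loop group of `SL₂`: `v` has no terms of
negative degree and is upper unitriangular at `z = 0`. The determinant is not prescribed. -/
def IsLoopNPlus (v : Matrix (Fin 2) (Fin 2) (LaurentSeries R)) : Prop :=
  (∀ i j : Fin 2, ∀ k : ℤ, k < 0 → (v i j).coeff k = 0) ∧
    (v 0 0).coeff 0 = 1 ∧ (v 1 1).coeff 0 = 1 ∧ (v 1 0).coeff 0 = 0

variable (R) in
/-- The representative `W_n` of the alternating word of length `n` in the affine Weyl group of
`SL₂`, up to a constant diagonal factor, over an arbitrary coefficient ring; `Wmat` is the case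
`R = ℂ`. -/
noncomputable def loopWeylRep (n : ℕ) : Matrix (Fin 2) (Fin 2) (LaurentSeries R) :=
  if n % 2 = 0 then
    !![single ((n / 2 : ℕ) : ℤ) 1, 0;
       0, single (-((n / 2 : ℕ) : ℤ)) 1]
  else
    !![0, single (-((n / 2 : ℕ) : ℤ) - 1) 1;
       single (((n / 2 : ℕ) : ℤ) + 1) 1, 0]

variable {v : Matrix (Fin 2) (Fin 2) (LaurentSeries R)}

lemma loopWeylRep_conj_of_even {n : ℕ} (hn : Even n) :
    loopWeylRep R n * v * (loopWeylRep R n)⁻¹ =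
      !![v 0 0, single (n : ℤ) 1 * v 0 1; single (-(n : ℤ)) 1 * v 1 0, v 1 1] := by
  obtain ⟨m, rfl⟩ := hn.exists_two_nsmul
  have rep_eq : loopWeylRep R (2 • m) = !![single (m : ℤ) 1, 0; 0, single (-(m : ℤ)) 1] := by
    simp [loopWeylRep]
  rw [rep_eq, diag_conj_fin_two (by simp)]
  simp

lemma loopWeylRep_conj_of_odd {n : ℕ} (hn : Odd n) :
    loopWeylRep R n * v * (loopWeylRep R n)⁻¹ =
      !![v 1 1, single (-((n : ℤ) + 1)) 1 * v 1 0; single ((n : ℤ) + 1) 1 * v 0 1, v 0 0] := by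
  obtain ⟨m, rfl⟩ := hn
  have rep_eq : loopWeylRep R (2 * m + 1) =
      !![0, single (-((m : ℤ) + 1)) 1; single ((m : ℤ) + 1) 1, 0] := by
    have half_eq : (2 * m + 1) / 2 = m := by lia
    simp [loopWeylRep, half_eq, neg_add_eq_sub, Nat.add_mod]
  have degree_eq : 2 * ((m : ℤ) + 1) = ((2 * m + 1 : ℕ) : ℤ) + 1 := by lia
  rw [rep_eq, antidiag_conj_fin_two (by simp), ← degree_eq]
  simp only [single_pow, one_pow, nsmul_eq_mul, Nat.cast_ofNat, mul_neg]

lemma isLoopNMinus_iff :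
    IsLoopNMinus v ↔
      (∀ k : ℤ, 0 ≤ k → (v 0 0).coeff k = (1 : LaurentSeries R).coeff k) ∧
      (∀ k : ℤ, 0 ≤ k → (v 1 1).coeff k = (1 : LaurentSeries R).coeff k) ∧
      (∀ k : ℤ, 0 ≤ k → (v 0 1).coeff k = 0) ∧ (∀ k : ℤ, 0 < k → (v 1 0).coeff k = 0) := by
  simp only [IsLoopNMinus, Fin.forall_fin_two, coeff_one]
  grind

lemma isLoopNPlus_iff :
    IsLoopNPlus v ↔
      (∀ k : ℤ, k ≤ 0 → (v 0 0).coeff k = (1 : LaurentSeries R).coeff k) ∧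
      (∀ k : ℤ, k ≤ 0 → (v 1 1).coeff k = (1 : LaurentSeries R).coeff k) ∧
      (∀ k : ℤ, k < 0 → (v 0 1).coeff k = 0) ∧ (∀ k : ℤ, k ≤ 0 → (v 1 0).coeff k = 0) := by
  simp only [IsLoopNPlus, Fin.forall_fin_two, coeff_one]
  grind

lemma isLoopNPlus_loopWeylRep_conj_iff (n : ℕ) :
    IsLoopNPlus (loopWeylRep R n * v * (loopWeylRep R n)⁻¹) ↔
      (∀ k : ℤ, k ≤ 0 → (v 0 0).coeff k = (1 : LaurentSeries R).coeff k) ∧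
      (∀ k : ℤ, k ≤ 0 → (v 1 1).coeff k = (1 : LaurentSeries R).coeff k) ∧
      (∀ k : ℤ, k < -n → (v 0 1).coeff k = 0) ∧ (∀ k : ℤ, k ≤ n → (v 1 0).coeff k = 0) := by
  rcases n.even_or_odd with hn | hn
  · simp only [loopWeylRep_conj_of_even hn, isLoopNPlus_iff, of_apply, cons_val', cons_val_zero,
      cons_val_one, cons_val_fin_one, forall_lt_coeff_single_mul_eq_zero_iff,
      forall_le_coeff_single_mul_eq_zero_iff, zero_sub, neg_neg]
  · have lt_iff (k : ℤ) : k < 0 - -((n : ℤ) + 1) ↔ k ≤ n := by lia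
    have le_iff (k : ℤ) : k ≤ 0 - ((n : ℤ) + 1) ↔ k < -n := by lia
    simp only [loopWeylRep_conj_of_odd hn, isLoopNPlus_iff, of_apply, cons_val', cons_val_zero,
      cons_val_one, cons_val_fin_one, forall_lt_coeff_single_mul_eq_zero_iff,
      forall_le_coeff_single_mul_eq_zero_iff, lt_iff, le_iff]
    tauto

lemma isLoopNMinus_and_isLoopNPlus_conj_iff (n : ℕ) :
    IsLoopNMinus v ∧ IsLoopNPlus (loopWeylRep R n * v * (loopWeylRep R n)⁻¹) ↔
      v 0 0 = 1 ∧ v 1 1 = 1 ∧ v 1 0 = 0 ∧ ∀ k : ℤ, k < -n ∨ 0 ≤ k → (v 0 1).coeff k = 0 := by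
  have eq_one_iff (f : LaurentSeries R) : f = 1 ↔
      (∀ k : ℤ, 0 ≤ k → f.coeff k = (1 : LaurentSeries R).coeff k) ∧
        (∀ k : ℤ, k ≤ 0 → f.coeff k = (1 : LaurentSeries R).coeff k) := by
    rw [HahnSeries.ext_iff, funext_iff]
    grind
  have lower_eq_zero_iff : v 1 0 = 0 ↔
      (∀ k : ℤ, 0 < k → (v 1 0).coeff k = 0) ∧ (∀ k : ℤ, k ≤ n → (v 1 0).coeff k = 0) := by
    simp only [HahnSeries.ext_iff, funext_iff, coeff_zero]
    grind
  simp only [isLoopNMinus_iff, isLoopNPlus_loopWeylRep_conj_iff, eq_one_iff, lower_eq_zero_iff,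
    or_imp, forall_and]
  tauto

end LoopGroup

theorem stmt3_general {R : Type*} [CommRing R] (n : ℕ)
    (v : Matrix (Fin 2) (Fin 2) (LaurentSeries R)) :
    (IsLoopNMinus v ∧ IsLoopNPlus (loopWeylRep R n * v * (loopWeylRep R n)⁻¹)) ↔
      ∃! x : Fin n → R,
        v = !![1, ∑ j : Fin n, single (-((j : ℕ) : ℤ) - 1) (x j); 0, 1] := by
  have degree_injective : Function.Injective fun j : Fin n ↦ -((j : ℕ) : ℤ) - 1 :=
    fun i j hij ↦ by grind
  rw [isLoopNMinus_and_isLoopNPlus_conj_iff]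
  simp only [← notMem_range_neg_sub_one_iff, ← existsUnique_eq_sum_single_iff degree_injective,
    eq_upper_unitriangular_iff, existsUnique_and_left]

/-- Characterization of `N⁻ ∩ w_n⁻¹ N⁺ w_n`:  a matrix `v` with `det v = 1` whose entries have
only nonpositive-degree terms, with diagonal `z⁰`-coefficients `1` and upper-right
`z⁰`-coefficient `0`, and such that `W_n v W_n⁻¹` has only nonnegative-degree terms, diagonal
`z⁰`-coefficients `1` and lower-left `z⁰`-coefficient `0`, is exactly a matrix of the form
`(1, Σ_{j=1}^n x_j z^{-j}; 0, 1)` for unique `x_1, …, x_n ∈ ℂ`. -/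
theorem stmt3 (n : ℕ) (hn : 1 ≤ n) (v : Matrix (Fin 2) (Fin 2) (LaurentSeries ℂ)) :
    (v.det = 1 ∧
      (∀ i j : Fin 2, ∀ k : ℤ, 0 < k → (v i j).coeff k = 0) ∧
      (v 0 0).coeff 0 = 1 ∧ (v 1 1).coeff 0 = 1 ∧ (v 0 1).coeff 0 = 0 ∧
      (∀ i j : Fin 2, ∀ k : ℤ, k < 0 → ((Wmat n * v * (Wmat n)⁻¹) i j).coeff k = 0) ∧
      ((Wmat n * v * (Wmat n)⁻¹) 0 0).coeff 0 = 1 ∧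
      ((Wmat n * v * (Wmat n)⁻¹) 1 1).coeff 0 = 1 ∧
      ((Wmat n * v * (Wmat n)⁻¹) 1 0).coeff 0 = 0)
    ↔ ∃! x : Fin n → ℂ,
        v = !![1, ∑ j : Fin n, HahnSeries.single (-((j : ℕ) : ℤ) - 1) (x j); 0, 1] := by
  have general : _ ↔ _ := stmt3_general (R := ℂ) n v
  simp only [IsLoopNMinus, and_assoc] at general
  exact ⟨fun h ↦ general.1 h.2, fun hx ↦ ⟨by obtain ⟨x, rfl, -⟩ := hx; simp, general.2 hx⟩⟩
end

section
/- Let n ≥ 1 and ζ = (ζ_1, …, ζ_n) ∈ ℂ^n, and let M_n(ζ) = (α_n, β_n; γ_n, δ_n) be as defined. Let ★ denote the ring involution of ℂ[z, z⁻¹] sending Σ c_k z^k to Σ conj(c_k) z^{−k}. Then: (i) det M_n(ζ) = ∏_{j=1}^{n} (1 + |ζ_j|²) (a constant); (ii) α_n = (δ_n)★ and γ_n = −(β_n)★; (iii) δ_n = 1 + Σ_{j=1}^{n} d_j z^{j} for some d_1, …, d_n ∈ ℂ, and β_n = Σ_{j=1}^{n} b_j z^{−j} for some b_1, …, b_n ∈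 ℂ. -/
open Matrix

/-- The factor `(1, ζ_j z^{-j}; −conj(ζ_j) z^{j}, 1)`. -/
noncomputable def factor (j : ℕ) (c : ℂ) : Matrix (Fin 2) (Fin 2) (LaurentSeries ℂ) :=
  !![1, HahnSeries.single (-(j : ℤ)) c;
     HahnSeries.single ((j : ℤ)) (-(starRingEnd ℂ c)), 1]

/-- `M_n(ζ)`: the product of the factors for `j = n, n−1, …, 1`, the `j = n` factor leftmost
(`ζ` is indexed starting at `1`). -/
noncomputable def Mmat (ζ : ℕ → ℂ) : ℕ → Matrix (Fin 2) (Fin 2) (LaurentSeries ℂ)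
  | 0 => 1
  | k + 1 => factor (k + 1) (ζ (k + 1)) * Mmat ζ k

/-!
Call a matrix quaternionic if it has the shape `(δ★, β; −β★, δ)`. Since `★` is a ring involution,
quaternionic matrices are closed under multiplication, exactly as the complex matrices
`(ā, b; −b̄, a)` are; each factor is quaternionic, hence so is `M_n`. The determinant is
multiplicative, and the exponents occurring in the second column are tracked through
`β_{n+1} = β_n + ζ_{n+1} z^{-(n+1)} δ_n` and `δ_{n+1} = δ_n − conj(ζ_{n+1}) z^{n+1} β_n`.
-/

open HahnSeries

section ConjInvert

variable {Γ R : Type*} [AddCommGroup Γ] [PartialOrder Γ]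

/-- `IsConjInvert f g` says `f = g★`, where `★` conjugates the coefficients and sends `z` to `z⁻¹`.
It is a relation because the reflection of an infinite series need not be a Hahn series. -/
def IsConjInvert [CommSemiring R] [StarRing R] (f g : HahnSeries Γ R) : Prop :=
  ∀ a : Γ, f.coeff a = starRingEnd R (g.coeff (-a))

namespace IsConjInvert

section CommSemiring

variable [CommSemiring R] [StarRing R] {f f' g g' : HahnSeries Γ R}

theorem symm (h : IsConjInvert f g) : IsConjInvert g f := fun a => by
  rw [h, neg_neg, starRingEnd_self_apply]

theorem single (a : Γ) (r : R) :
    IsConjInvert (single a r) (single (-a) (starRingEnd R r)) := fun b => by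
  classical simp [coeff_single, apply_ite (starRingEnd R)]

theorem one : IsConjInvert (1 : HahnSeries Γ R) 1 := by
  simpa using IsConjInvert.single (0 : Γ) (1 : R)

theorem add (h : IsConjInvert f g) (h' : IsConjInvert f' g') :
    IsConjInvert (f + f') (g + g') := fun a => by
  rw [coeff_add, coeff_add, map_add, h, h']

theorem mem_support_iff (h : IsConjInvert f g) (a : Γ) : a ∈ f.support ↔ -a ∈ g.support := by
  rw [mem_support, mem_support, h, starRingEnd_apply, star_ne_zero]

theorem mul [IsOrderedAddMonoid Γ] (h : IsConjInvert f g) (h' : IsConjInvert f' g') :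
    IsConjInvert (f * f') (g * g') := fun a => by
  rw [coeff_mul, coeff_mul, map_sum]
  refine Finset.sum_equiv (Equiv.neg (Γ × Γ)) (fun p => ?_) fun p _ => ?_
  · simp only [Finset.mem_antidiagonal, h.mem_support_iff, h'.mem_support_iff, Equiv.neg_apply,
      Prod.fst_neg, Prod.snd_neg, ← neg_add, neg_inj]
  · rw [map_mul, h, h', Equiv.neg_apply, Prod.fst_neg, Prod.snd_neg]

end CommSemiring

theorem neg [CommRing R] [StarRing R] {f g : HahnSeries Γ R} (h : IsConjInvert f g) :
    IsConjInvert (-f) (-g) := fun a => by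
  rw [coeff_neg, coeff_neg, map_neg, h]

end IsConjInvert

/-- Matrices of the shape `(δ★, β; −β★, δ)`, the analogue over Hahn series of the complex
`2 × 2` matrices representing quaternions. -/
structure IsQuaternionic [CommRing R] [StarRing R]
    (A : Matrix (Fin 2) (Fin 2) (HahnSeries Γ R)) : Prop where
  conjInvert_diag : IsConjInvert (A 0 0) (A 1 1)
  conjInvert_offDiag : IsConjInvert (A 1 0) (-A 0 1)

namespace IsQuaternionic

variable [CommRing R] [StarRing R] {A B : Matrix (Fin 2) (Fin 2) (HahnSeries Γ R)}

theorem one : IsQuaternionic (1 : Matrix (Fin 2) (Fin 2) (HahnSeries Γ R)) where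
  conjInvert_diag := by simpa using IsConjInvert.one
  conjInvert_offDiag := fun a => by simp

theorem mul [IsOrderedAddMonoid Γ] (hA : IsQuaternionic A) (hB : IsQuaternionic B) :
    IsQuaternionic (A * B) where
  conjInvert_diag := by
    have h := (hA.conjInvert_diag.mul hB.conjInvert_diag).add
      (hA.conjInvert_offDiag.symm.mul hB.conjInvert_offDiag).neg
    convert h using 1 <;> simp [mul_apply, add_comm]
  conjInvert_offDiag := by
    have h := (hA.conjInvert_offDiag.mul hB.conjInvert_diag).add
      (hA.conjInvert_diag.symm.mul hB.conjInvert_offDiag)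
    convert h using 1 <;> simp [mul_apply, add_comm]

end IsQuaternionic

end ConjInvert

section Support

open scoped Pointwise

variable {Γ R : Type*} [PartialOrder Γ]

theorem eq_sum_single_of_support_subset_image {ι : Type*} [AddCommMonoid R] {x : HahnSeries Γ R}
    {e : ι → Γ} {s : Finset ι} (he : Set.InjOn e s) (hx : x.support ⊆ e '' s) :
    x = ∑ i ∈ s, single (e i) (x.coeff (e i)) := by
  classical
  ext a
  simp only [coeff_sum, coeff_single]
  by_cases ha : a ∈ e '' s
  · obtain ⟨i, hi, rfl⟩ := ha
    rw [Finset.sum_eq_single_of_mem i hi fun j hj hji => if_neg fun h => hji (he hj hi h.symm),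
      if_pos rfl]
  · rw [Finset.sum_eq_zero fun i hi => if_neg fun h => ha ⟨i, hi, h.symm⟩]
    exact not_not.mp fun h => ha (hx h)

theorem exists_eq_sum_single_of_support_subset_Icc [AddCommMonoid R] {x : HahnSeries ℤ R}
    {a b : ℕ} (hx : x.support ⊆ Set.Icc (a : ℤ) b) :
    ∃ c : ℕ → R, x = ∑ j ∈ Finset.Icc a b, single (j : ℤ) (c j) := by
  rw [← Nat.image_cast_int_Icc, ← Finset.coe_Icc] at hx
  exact ⟨_, eq_sum_single_of_support_subset_image Nat.cast_injective.injOn hx⟩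

theorem exists_eq_sum_single_neg_of_support_subset_Icc [AddCommMonoid R] {x : HahnSeries ℤ R}
    {a b : ℕ} (hx : x.support ⊆ Set.Icc (-b : ℤ) (-a)) :
    ∃ c : ℕ → R, x = ∑ j ∈ Finset.Icc a b, single (-(j : ℤ)) (c j) := by
  rw [← Set.image_neg_Icc, ← Nat.image_cast_int_Icc, ← Finset.coe_Icc, Set.image_image] at hx
  exact ⟨_, eq_sum_single_of_support_subset_image
    (neg_injective.comp Nat.cast_injective).injOn hx⟩

theorem support_single_mul_subset_Icc [AddCommGroup Γ] [IsOrderedAddMonoid Γ]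
    [NonUnitalNonAssocSemiring R] {x : HahnSeries Γ R} {b c : Γ} (hx : x.support ⊆ Set.Icc b c)
    (a : Γ) (r : R) : (single a r * x).support ⊆ Set.Icc (a + b) (a + c) :=
  calc (single a r * x).support
    _ ⊆ (single a r).support + x.support := support_mul_subset
    _ ⊆ {a} + Set.Icc b c := Set.add_subset_add support_single_subset hx
    _ = Set.Icc (a + b) (a + c) := by rw [Set.singleton_add, Set.image_const_add_Icc]

end Support

theorem det_factor (j : ℕ) (c : ℂ) :
    (factor j c).det = single (0 : ℤ) ((1 + ‖c‖ ^ 2 : ℝ) : ℂ) := by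
  rw [factor, det_fin_two_of, single_mul_single, neg_add_cancel, mul_neg, Complex.mul_conj',
    HahnSeries.single_neg, sub_neg_eq_add, one_mul]
  push_cast
  rw [HahnSeries.single_add, single_zero_one]

theorem isQuaternionic_factor (j : ℕ) (c : ℂ) : IsQuaternionic (factor j c) where
  conjInvert_diag := IsConjInvert.one
  conjInvert_offDiag := by
    simpa [factor] using IsConjInvert.single (j : ℤ) (-(starRingEnd ℂ c))

section Mmat

variable (ζ : ℕ → ℂ) (n : ℕ)

theorem det_Mmat :
    (Mmat ζ n).det = single (0 : ℤ) ((∏ j ∈ Finset.Icc 1 n, (1 + ‖ζ j‖ ^ 2) : ℝ) : ℂ) := by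
  induction n with
  | zero => simp [Mmat]
  | succ n ih =>
    rw [Mmat, det_mul, ih, det_factor, single_mul_single, add_zero,
      Finset.prod_Icc_succ_top (Nat.le_add_left 1 n), mul_comm, Complex.ofReal_mul]

theorem isQuaternionic_Mmat : IsQuaternionic (Mmat ζ n) := by
  induction n with
  | zero => exact .one
  | succ n ih => exact (isQuaternionic_factor _ _).mul ih

theorem Mmat_succ_zero_one :
    Mmat ζ (n + 1) 0 1
      = Mmat ζ n 0 1 + single (-((n + 1 : ℕ) : ℤ)) (ζ (n + 1)) * Mmat ζ n 1 1 := by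
  simp [Mmat, factor, mul_apply]

theorem Mmat_succ_one_one :
    Mmat ζ (n + 1) 1 1
      = single ((n + 1 : ℕ) : ℤ) (-(starRingEnd ℂ (ζ (n + 1)))) * Mmat ζ n 0 1
        + Mmat ζ n 1 1 := by
  simp [Mmat, factor, mul_apply]

theorem support_Mmat_subset :
    (Mmat ζ n 0 1).support ⊆ Set.Icc (-n : ℤ) (-1) ∧
      (Mmat ζ n 1 1 - 1).support ⊆ Set.Icc (1 : ℤ) n := by
  induction n with
  | zero => simp [Mmat]
  | succ n ih =>
    obtain ⟨hβ, hδ⟩ := ih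
    constructor
    · have hδ' : (Mmat ζ n 1 1).support ⊆ Set.Icc (0 : ℤ) n := by
        rw [← sub_add_cancel (Mmat ζ n 1 1) 1]
        refine (support_add_subset _ _).trans (Set.union_subset ?_ ?_)
        · exact hδ.trans (Set.Icc_subset_Icc_left zero_le_one)
        · simp
      rw [Mmat_succ_zero_one]
      refine (support_add_subset _ _).trans (Set.union_subset ?_ ?_)
      · exact hβ.trans (Set.Icc_subset_Icc_left (by grind))
      · refine (support_single_mul_subset_Icc hδ' _ _).trans (Set.Icc_subset_Icc ?_ ?_) <;> grind
    · rw [Mmat_succ_one_one, add_sub_assoc]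
      refine (support_add_subset _ _).trans (Set.union_subset ?_ ?_)
      · refine (support_single_mul_subset_Icc hβ _ _).trans (Set.Icc_subset_Icc ?_ ?_) <;> grind
      · exact hδ.trans (Set.Icc_subset_Icc_right (by grind))

end Mmat

/-- Writing `M_n(ζ) = (α_n, β_n; γ_n, δ_n)`:
(i) `det M_n(ζ) = ∏_{j=1}^n (1+|ζ_j|²)` (a constant);
(ii) `α_n = (δ_n)★` and `γ_n = −(β_n)★`, stated coefficientwise, where `★` sends
`Σ c_k z^k` to `Σ conj(c_k) z^{-k}`;
(iii) `δ_n = 1 + Σ_{j=1}^n d_j z^j` and `β_n = Σ_{j=1}^n b_j z^{-j}` for some `d_j, b_j ∈ ℂ`. -/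
theorem stmt5 (n : ℕ) (hn : 1 ≤ n) (ζ : ℕ → ℂ) :
    (Mmat ζ n).det
        = HahnSeries.single (0 : ℤ)
            (((∏ j ∈ Finset.Icc 1 n, (1 + ‖ζ j‖ ^ 2) : ℝ) : ℂ)) ∧
    (∀ k : ℤ, ((Mmat ζ n) 0 0).coeff k = starRingEnd ℂ (((Mmat ζ n) 1 1).coeff (-k))) ∧
    (∀ k : ℤ, ((Mmat ζ n) 1 0).coeff k = -starRingEnd ℂ (((Mmat ζ n) 0 1).coeff (-k))) ∧
    (∃ d : ℕ → ℂ,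
      (Mmat ζ n) 1 1 = 1 + ∑ j ∈ Finset.Icc 1 n, HahnSeries.single ((j : ℤ)) (d j)) ∧
    (∃ b : ℕ → ℂ,
      (Mmat ζ n) 0 1 = ∑ j ∈ Finset.Icc 1 n, HahnSeries.single (-(j : ℤ)) (b j)) := by
  have hform := isQuaternionic_Mmat ζ n
  obtain ⟨hβ, hδ⟩ := support_Mmat_subset ζ n
  refine ⟨det_Mmat ζ n, hform.conjInvert_diag, fun k => ?_, ?_, ?_⟩
  · rw [← map_neg]
    exact hform.conjInvert_offDiag k
  · obtain ⟨d, hd⟩ := exists_eq_sum_single_of_support_subset_Icc (by exact_mod_cast hδ)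
    exact ⟨d, eq_add_of_sub_eq' hd⟩
  · exact exists_eq_sum_single_neg_of_support_subset_Icc (by exact_mod_cast hβ)
end

section
/- Let n ≥ 1, let ζ ∈ ℂ, and let x ∈ ℂ[z, z⁻¹] be a Laurent polynomial supported in degrees −n, …, −1. Then ( (x + ζ z^{−n−1}) · Σ_{p=0}^{n} (conj(ζ)·x·z^{n+1})^p )₋ = ( (1+|ζ|²) · Σ_{p=0}^{n} conj(ζ)^p · x^{p+1} · z^{p(n+1)} )₋ + ζ z^{−n−1}. -/
/-- The singular part `(f)₋` of a Laurent series: the sum of its strictly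
negative-degree terms. -/
noncomputable def singPart (f : LaurentSeries ℂ) : LaurentSeries ℂ where
  coeff k := if k < 0 then f.coeff k else 0
  isPWO_support' := by
    apply f.isPWO_support'.mono
    intro k hk
    simp only [Function.mem_support] at hk ⊢
    by_cases h : k < 0
    · simpa [h] using hk
    · simp [h] at hk

/-
Put `y = conj(ζ) x z^(n+1)`. Multiplication by `y` turns `ζ z^(-n-1)` into `|ζ|² x`, so
multiplying the geometric sum of `y` by `ζ z^(-n-1)` reproduces `|ζ|² x` times that sum, up to the
two end terms: `ζ z^(-n-1)` itself and `|ζ|² x y^n`. Since `x` has order at least `-n` and `y` has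
order at least `1`, the second end term has no singular part.
-/

open Finset HahnSeries

theorem add_mul_geom_sum_add {R : Type*} [CommSemiring R] {x y w d : R} (h : w * y = d * x)
    (n : ℕ) :
    (x + w) * ∑ p ∈ range (n + 1), y ^ p + d * x * y ^ n =
      (1 + d) * (x * ∑ p ∈ range (n + 1), y ^ p) + w := by
  have hw : w * ∑ p ∈ range (n + 1), y ^ p = d * x * ∑ p ∈ range n, y ^ p + w := by
    rw [geom_sum_succ, mul_add, ← mul_assoc, h, mul_one]
  rw [add_mul, hw, sum_range_succ]
  ring

section CommSemiring

variable {R : Type*} [CommSemiring R]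

theorem mul_geom_sum_single_mul_mul_single (x : LaurentSeries R) (b : R) (m : ℤ) (N : ℕ) :
    x * ∑ p ∈ range N, (single 0 b * x * single m 1) ^ p =
      ∑ p ∈ range N, single 0 (b ^ p) * x ^ (p + 1) * single ((p : ℤ) * m) 1 := by
  rw [mul_sum]
  refine sum_congr rfl fun p _ ↦ ?_
  rw [mul_pow, mul_pow, single_pow, single_pow, one_pow, smul_zero, nsmul_eq_mul]
  ring

theorem single_neg_mul_single_mul_mul_single (x : LaurentSeries R) (a b : R) (m : ℤ) :
    single (-m) a * (single 0 b * x * single m 1) = single 0 (a * b) * x := by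
  calc single (-m) a * (single 0 b * x * single m 1)
      = single (-m) a * single 0 b * single m 1 * x := by ring
    _ = single 0 (a * b) * x := by simp only [single_mul_single, mul_one, add_zero, neg_add_cancel]

end CommSemiring

section Semiring

variable {R : Type*} [Semiring R]

theorem orderTop_le_orderTop_single_zero_mul (x : LaurentSeries R) (c : R) :
    x.orderTop ≤ (single 0 c * x).orderTop := by
  rw [single_zero_mul_eq_smul]
  exact orderTop_le_orderTop_smul c x

theorem orderTop_add_le_orderTop_single_zero_mul_mul_single (x : LaurentSeries R) (b c : R)
    (m : ℤ) :
    x.orderTop + m ≤ (single 0 b * x * single m c).orderTop :=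
  (add_le_add (orderTop_le_orderTop_single_zero_mul x b) orderTop_single_le).trans
    orderTop_add_le_mul

theorem orderTop_mul_pow_nonneg {x y : LaurentSeries R} {n : ℕ}
    (hx : ((-n : ℤ) : WithTop ℤ) ≤ x.orderTop) (hy : 1 ≤ y.orderTop) :
    0 ≤ (x * y ^ n).orderTop :=
  calc (0 : WithTop ℤ) = ((-n : ℤ) : WithTop ℤ) + n • 1 := by
        rw [nsmul_one]; exact_mod_cast (neg_add_cancel (n : ℤ)).symm
    _ ≤ x.orderTop + n • y.orderTop := add_le_add hx (nsmul_le_nsmul_right hy n)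
    _ ≤ x.orderTop + (y ^ n).orderTop := add_le_add_right orderTop_nsmul_le_orderTop_pow _
    _ ≤ (x * y ^ n).orderTop := orderTop_add_le_mul

end Semiring

theorem singPart_add (f g : LaurentSeries ℂ) : singPart (f + g) = singPart f + singPart g := by
  ext k
  simp only [singPart, coeff_add]
  split_ifs <;> simp

theorem singPart_eq_zero_of_orderTop_nonneg {f : LaurentSeries ℂ} (hf : 0 ≤ f.orderTop) :
    singPart f = 0 := by
  ext k
  simp only [singPart, coeff_zero, ite_eq_right_iff]
  exact fun hk ↦ coeff_eq_zero_of_lt_orderTop ((WithTop.coe_lt_coe.2 hk).trans_le hf)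

theorem singPart_single_of_neg {k : ℤ} (hk : k < 0) (c : ℂ) :
    singPart (single k c) = single k c := by
  ext j
  simp only [singPart, ite_eq_left_iff, not_lt]
  exact fun hj ↦ (coeff_single_of_ne (hk.trans_le hj).ne').symm

theorem stmt8_general (n : ℕ) (a b : ℂ) (x : LaurentSeries ℂ)
    (hx : ∀ k < -(n : ℤ), x.coeff k = 0) :
    singPart ((x + single (-(n : ℤ) - 1) a) *
        ∑ p ∈ range (n + 1), (single (0 : ℤ) b * x * single ((n : ℤ) + 1) 1) ^ p) =
      singPart (single (0 : ℤ) (1 + a * b) *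
          ∑ p ∈ range (n + 1),
            single (0 : ℤ) (b ^ p) * x ^ (p + 1) * single ((p : ℤ) * ((n : ℤ) + 1)) 1) +
        single (-(n : ℤ) - 1) a := by
  set y : LaurentSeries ℂ := single 0 b * x * single ((n : ℤ) + 1) 1 with hy
  set d : LaurentSeries ℂ := single 0 (a * b)
  have hx_order : ((-n : ℤ) : WithTop ℤ) ≤ x.orderTop :=
    le_orderTop_iff_forall.2 fun k hk ↦ hx k (WithTop.coe_lt_coe.1 hk)
  have hy_order : 1 ≤ y.orderTop :=
    calc (1 : WithTop ℤ) = ((-n : ℤ) : WithTop ℤ) + ((n + 1 : ℤ) : WithTop ℤ) := by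
          rw [← WithTop.coe_add, neg_add_cancel_left, WithTop.coe_one]
      _ ≤ x.orderTop + ((n + 1 : ℤ) : WithTop ℤ) := add_le_add_left hx_order _
      _ ≤ y.orderTop := orderTop_add_le_orderTop_single_zero_mul_mul_single x b 1 _
  have h_tail : singPart (d * x * y ^ n) = 0 :=
    singPart_eq_zero_of_orderTop_nonneg <| orderTop_mul_pow_nonneg
      (hx_order.trans (orderTop_le_orderTop_single_zero_mul x _)) hy_order
  have h_shift : single (-(n : ℤ) - 1) a * y = d * x := by
    rw [← neg_add']
    exact single_neg_mul_single_mul_mul_single x a b _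
  have h_one_add : single (0 : ℤ) (1 + a * b) = 1 + d := by rw [single_add, single_zero_one]
  have h_sing := congrArg singPart (add_mul_geom_sum_add h_shift n)
  rwa [singPart_add, h_tail, add_zero, singPart_add, singPart_single_of_neg (by lia), ← h_one_add,
    hy, mul_geom_sum_single_mul_mul_single] at h_sing

/-- For `x` supported in degrees `−n, …, −1`:
`((x + ζ z^{−n−1}) Σ_{p=0}^n (conj(ζ) x z^{n+1})^p)₋
  = ((1+|ζ|²) Σ_{p=0}^n conj(ζ)^p x^{p+1} z^{p(n+1)})₋ + ζ z^{−n−1}`. -/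
theorem stmt8 (n : ℕ) (hn : 1 ≤ n) (ζ : ℂ) (x : LaurentSeries ℂ)
    (hx : ∀ k : ℤ, (k < -(n : ℤ) ∨ 0 ≤ k) → x.coeff k = 0) :
    singPart ((x + HahnSeries.single (-(n : ℤ) - 1) ζ) *
        ∑ p ∈ Finset.range (n + 1),
          (HahnSeries.single (0 : ℤ) (starRingEnd ℂ ζ) * x *
            HahnSeries.single ((n : ℤ) + 1) 1) ^ p)
      = singPart (HahnSeries.single (0 : ℤ) (((1 + ‖ζ‖ ^ 2 : ℝ) : ℂ)) *
            ∑ p ∈ Finset.range (n + 1),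
              HahnSeries.single (0 : ℤ) ((starRingEnd ℂ ζ) ^ p) * x ^ (p + 1) *
                HahnSeries.single ((p : ℤ) * ((n : ℤ) + 1)) 1)
          + HahnSeries.single (-(n : ℤ) - 1) ζ := by
  rw [Complex.ofReal_add, Complex.ofReal_one, Complex.ofReal_pow, ← Complex.mul_conj']
  exact stmt8_general n ζ _ x fun k hk ↦ hx k (.inl hk)
end

section
/- Let n ≥ 1, let ζ ∈ ℂ, let x ∈ ℂ[z, z⁻¹] be a Laurent polynomial supported in degrees −n, …, −1, and let h ∈ ℂ[z, z⁻¹] be a Laurent polynomial having only terms of nonnegative degree. Then ( (x + h + ζ z^{−n−1}) · Σ_{p=0}^{n} (conj(ζ)·(x+h)·z^{n+1})^p )₋ = ( (x + ζ z^{−n−1}) · Σ_{p=0}^{n} (conj(ζ)·x·z^{n+1})^p )₋; that is, replacing x by x + h does not change the singular part of the recursion expression. -/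
/-!
Call a series integral when all its exponents are nonnegative. With `γ = n + 1`, `w = ζ z⁻ᵞ` and
`P = ∑ₚ (conj(ζ) X)ᵖ`, replacing `x` by `x + h` changes `(x + w) P(x zᵞ)` into
`(x + h + w) P((x + h) zᵞ)`. Both arguments of `P` are integral and they differ by `h zᵞ`, so the
two values of `P` are integral and differ by `h zᵞ q` with `q` integral. Since `x + w` has order at
least `-γ`, the factor `zᵞ` makes `(x + w) zᵞ` integral; hence the whole expression changes by an
integral series, which has no singular part.
-/

open HahnSeries Polynomial

section Subalgebra

variable {R A : Type*} [CommRing R] [CommRing A] [Algebra R A] (S : Subalgebra R A)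

lemma exists_mem_aeval_sub_aeval_eq_mul {u v : A} (hu : u ∈ S) (hv : v ∈ S) (P : R[X]) :
    ∃ q ∈ S, aeval u P - aeval v P = (u - v) * q := by
  lift u to S using hu
  lift v to S using hv
  obtain ⟨q, hq⟩ : u - v ∣ aeval u P - aeval v P := by
    simpa only [eval_map_algebraMap] using sub_dvd_eval_sub u v (P.map (algebraMap R S))
  refine ⟨q, q.2, ?_⟩
  simpa [Subalgebra.aeval_coe] using congrArg S.val hq

lemma add_mul_aeval_sub_mul_aeval_mem {a x h t : A} (hat : a * t ∈ S) (hxt : x * t ∈ S)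
    (hh : h ∈ S) (ht : t ∈ S) (P : R[X]) :
    (a + h) * aeval ((x + h) * t) P - a * aeval (x * t) P ∈ S := by
  have hxht : (x + h) * t ∈ S := by
    rw [add_mul]
    exact add_mem hxt (mul_mem hh ht)
  have hP : aeval ((x + h) * t) P ∈ S :=
    Algebra.adjoin_singleton_le hxht (aeval_mem_adjoin_singleton R _)
  obtain ⟨q, hqS, hq⟩ := exists_mem_aeval_sub_aeval_eq_mul S hxht hxt P
  have hdiff : (a + h) * aeval ((x + h) * t) P - a * aeval (x * t) P =
      h * aeval ((x + h) * t) P + a * t * (h * q) := by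
    linear_combination a * hq
  rw [hdiff]
  exact add_mem (mul_mem hh hP) (mul_mem hat (mul_mem hh hqS))

end Subalgebra

lemma coe_le_orderTop_iff {Γ R : Type*} [LinearOrder Γ] [Zero R] {γ : Γ} {f : R⟦Γ⟧} :
    (γ : WithTop Γ) ≤ f.orderTop ↔ ∀ g < γ, f.coeff g = 0 := by
  simp only [le_orderTop_iff_forall, WithTop.coe_lt_coe]

section OrderedCancelAddMonoid

variable {Γ R : Type*} [AddCommMonoid Γ] [LinearOrder Γ] [IsOrderedCancelAddMonoid Γ] [CommRing R]

variable (Γ R) in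
/-- The subalgebra of integral Hahn series, those without terms of negative exponent; for Laurent
series these are the power series. Integrality is encoded as `0 ≤ f.orderTop`, which includes
`f = 0` because `orderTop 0 = ⊤`. -/
def integralHahnSeries : Subalgebra R R⟦Γ⟧ where
  carrier := {f | 0 ≤ f.orderTop}
  add_mem' {f g} (hf : 0 ≤ f.orderTop) (hg : 0 ≤ g.orderTop) :=
    show 0 ≤ (f + g).orderTop from (le_min hf hg).trans min_orderTop_le_orderTop_add
  mul_mem' {f g} (hf : 0 ≤ f.orderTop) (hg : 0 ≤ g.orderTop) :=
    show 0 ≤ (f * g).orderTop from (add_nonneg hf hg).trans orderTop_add_le_mul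
  algebraMap_mem' _ := orderTop_single_le

lemma mem_integralHahnSeries {f : R⟦Γ⟧} : f ∈ integralHahnSeries Γ R ↔ 0 ≤ f.orderTop :=
  Iff.rfl

lemma truncLT_zero_eq_of_sub_mem {f g : R⟦Γ⟧} (hfg : f - g ∈ integralHahnSeries Γ R) :
    truncLT 0 f = truncLT 0 g := by
  ext k
  simp only [HahnSeries.coeff_truncLT]
  split_ifs with hk
  · have hcoeff : (f - g).coeff k = 0 := coe_le_orderTop_iff.mp hfg k hk
    rwa [HahnSeries.coeff_sub, sub_eq_zero] at hcoeff
  · rfl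

lemma aeval_mul_sum_C_mul_X_pow (c : R) (x z : R⟦Γ⟧) (s : Finset ℕ) :
    aeval (x * z) (∑ p ∈ s, (Polynomial.C c * X) ^ p) =
      ∑ p ∈ s, (single 0 c * x * z) ^ p := by
  simp only [map_sum, map_pow, map_mul, aeval_C, aeval_X, HahnSeries.algebraMap_apply,
    Algebra.algebraMap_self_apply, HahnSeries.C_apply, mul_assoc]

end OrderedCancelAddMonoid

section OrderedAddGroup

variable {Γ R : Type*} [AddCommGroup Γ] [LinearOrder Γ] [IsOrderedAddMonoid Γ] [CommRing R]

lemma mul_single_mem_integralHahnSeries {γ : Γ} {f : R⟦Γ⟧} (hf : (-γ : Γ) ≤ f.orderTop) (r : R) :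
    f * single γ r ∈ integralHahnSeries Γ R := by
  rw [mem_integralHahnSeries]
  calc (0 : WithTop Γ) = (-γ : Γ) + (γ : WithTop Γ) := by
        rw [← WithTop.coe_add, neg_add_cancel, WithTop.coe_zero]
    _ ≤ f.orderTop + (single γ r).orderTop := add_le_add hf orderTop_single_le
    _ ≤ (f * single γ r).orderTop := orderTop_add_le_mul

theorem stmt9_general (P : R[X]) {γ : Γ} (hγ : 0 ≤ γ) {x h w : R⟦Γ⟧}
    (hx : ∀ k < -γ, x.coeff k = 0) (hh : ∀ k < 0, h.coeff k = 0) (hw : ∀ k < -γ, w.coeff k = 0) :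
    truncLT 0 ((x + h + w) * aeval ((x + h) * single γ 1) P) =
      truncLT 0 ((x + w) * aeval (x * single γ 1) P) := by
  rw [← coe_le_orderTop_iff] at hx hh hw
  have hxw : (-γ : Γ) ≤ (x + w).orderTop := (le_min hx hw).trans min_orderTop_le_orderTop_add
  have hz : single γ (1 : R) ∈ integralHahnSeries Γ R :=
    (WithTop.coe_le_coe.mpr hγ).trans orderTop_single_le
  rw [add_right_comm x h w]
  exact truncLT_zero_eq_of_sub_mem <| add_mul_aeval_sub_mul_aeval_mem _
    (mul_single_mem_integralHahnSeries hxw 1) (mul_single_mem_integralHahnSeries hx 1) hh hz P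

end OrderedAddGroup

lemma singPart_eq_truncLT (f : LaurentSeries ℂ) : singPart f = truncLT 0 f :=
  rfl

/-- For `x` supported in degrees `−n, …, −1` and `h` with only nonnegative-degree terms,
replacing `x` by `x + h` does not change the singular part of the recursion expression:
`((x + h + ζ z^{−n−1}) Σ_{p=0}^n (conj(ζ)(x+h) z^{n+1})^p)₋
  = ((x + ζ z^{−n−1}) Σ_{p=0}^n (conj(ζ) x z^{n+1})^p)₋`. -/
theorem stmt9 (n : ℕ) (hn : 1 ≤ n) (ζ : ℂ) (x h : LaurentSeries ℂ)
    (hx : ∀ k : ℤ, (k < -(n : ℤ) ∨ 0 ≤ k) → x.coeff k = 0)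
    (hh : ∀ k : ℤ, k < 0 → h.coeff k = 0) :
    singPart ((x + h + HahnSeries.single (-(n : ℤ) - 1) ζ) *
        ∑ p ∈ Finset.range (n + 1),
          (HahnSeries.single (0 : ℤ) (starRingEnd ℂ ζ) * (x + h) *
            HahnSeries.single ((n : ℤ) + 1) 1) ^ p)
      = singPart ((x + HahnSeries.single (-(n : ℤ) - 1) ζ) *
          ∑ p ∈ Finset.range (n + 1),
            (HahnSeries.single (0 : ℤ) (starRingEnd ℂ ζ) * x *
              HahnSeries.single ((n : ℤ) + 1) 1) ^ p) := by
  have key := stmt9_general (∑ p ∈ Finset.range (n + 1), (Polynomial.C (starRingEnd ℂ ζ) * X) ^ p)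
    (γ := (n : ℤ) + 1) (w := single (-(n : ℤ) - 1) ζ) (by positivity)
    (fun k hk ↦ hx k (.inl (by lia))) hh (fun k hk ↦ coeff_single_of_ne (by lia))
  simpa only [singPart_eq_truncLT, aeval_mul_sum_C_mul_X_pow] using key
end
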